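/- arXiv:2308.02956 — 3 statements merged into one kernel-verified Lean document; each statement's English description precedes it below -/
import Mathlib

section
/- Let K and L be convex bodies in ℝⁿ with n ≥ 3 and L ⊂ int K, and let H₁ and H₂ be two distinct parallel hyperplanes such that K and L are contained in the open slab between them. Suppose that for every point x ∈ H₁ ∪ H₂ there is a number λ(x) such that every line through x supporting L intersects K in a chord of length λ(x). Then K and L are concentric Euclidean balls. -/
/-!
Call a line horizontal if its direction is orthogonal to `v`, and a hyperplane horizontal if its
normal is parallel to `v`. The proof has three parts.

*The chord length is a constant.* For nearby points `x, x'` of the first hyperplane, project `L`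
centrally from each of them to the second hyperplane. As `n ≥ 3`, there is a nonzero `m` orthogonal
to `v` and to `x' - x`; the two shadows are convex, they intersect, and they reach equally far in
direction `m`. A point `y` of their intersection that is extreme in direction `m` is therefore a
relative boundary point of both, so that the lines `xy` and `x'y` both support `L` (`exists_link`).
Hence `lam x = lam y = lam x'`, and `lam` is constant on the first hyperplane. Every non-horizontal
line meets that hyperplane, so all non-horizontal supporting lines of `L` cut chords of one length
`lam` (`ConstChords`).

*Sections are balls.* Let `H` be a non-horizontal supporting hyperplane of `L` touching it at `p`.
In a plane through an interior point of `L`, the length of the chords of `K` of a fixed direction is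
a concave function, equal to `lam` on the two supporting lines of `L`; beyond them it is at
most `lam`. So chords of `K` in `H` have length at most `lam` (`chord_le`), while those through `p`
have length exactly `lam`. Each chord through `p` is then a double normal of `K ∩ H`, and comparing
neighbouring directions shows that the radius from `p` has zero derivative on great circles. Thus
`K ∩ H` is the ball of radius `lam / 2` about `p` (`section_eq_ball`).

*Rigidity.* The contact point `P ν` with unit normal `ν` is unique and continuous in `ν`. For
nearby normals the two supporting hyperplanes meet inside `K`, and the two balls cut by them share
their intersection with the common flat; this forces `P ν - P ν' = R • (ν - ν')`
(`pair_relation`). Three normals have a common ratio `R`, so `P ν = c + R • ν` locally, and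
globally because the complement of the line `ℝ v` is connected (`global_affine`). Hence `L` is the
ball of radius `R` about `c`, and `K` is the concentric ball of radius `√(R ^ 2 + (lam / 2) ^ 2)`.
-/

open Metric Set
open scoped RealInnerProductSpace

noncomputable section

/-- The line through `a` with direction `u`. -/
def lineThrough {n : ℕ} (a u : EuclideanSpace ℝ (Fin n)) : Set (EuclideanSpace ℝ (Fin n)) :=
  {x | ∃ t : ℝ, x = a + t • u}

/-- The line through `a` with direction `u` supports `L`: it meets `L`
but is disjoint from the interior of `L`. -/
def LineSupports {n : ℕ} (L : Set (EuclideanSpace ℝ (Fin n)))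
    (a u : EuclideanSpace ℝ (Fin n)) : Prop :=
  (lineThrough a u ∩ L).Nonempty ∧ lineThrough a u ∩ interior L = ∅

section Sections
variable {E : Type*} [NormedAddCommGroup E] [InnerProductSpace ℝ E]

/-! ### Preliminaries -/

lemma exists_unit_orth [FiniteDimensional ℝ E] (hdim : 3 ≤ Module.finrank ℝ E) (a b : E) :
    ∃ e : E, ‖e‖ = 1 ∧ ⟪a, e⟫ = 0 ∧ ⟪b, e⟫ = 0 := by
  classical
  have h2 : Module.finrank ℝ (Submodule.span ℝ ({a, b} : Set E)) ≤ 2 := by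
    have h := finrank_span_finset_le_card (R := ℝ) ({a, b} : Finset E)
    rw [Finset.coe_pair] at h
    exact h.trans Finset.card_le_two
  have h3 := (Submodule.span ℝ ({a, b} : Set E)).finrank_add_finrank_orthogonal
  have hne : (Submodule.span ℝ ({a, b} : Set E))ᗮ ≠ ⊥ := by
    intro h
    rw [h, finrank_bot] at h3
    omega
  obtain ⟨e, he, he0⟩ := Submodule.exists_mem_ne_zero_of_ne_bot hne
  refine ⟨‖e‖⁻¹ • e, by simp [norm_smul, he0], ?_, ?_⟩
  · rw [inner_smul_right, (Submodule.mem_orthogonal _ _).1 he a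
      (Submodule.subset_span (by simp)), mul_zero]
  · rw [inner_smul_right, (Submodule.mem_orthogonal _ _).1 he b
      (Submodule.subset_span (by simp)), mul_zero]

lemma exists_small_mem {U : Set E} (hU : IsOpen U) {q : E} (hq : q ∈ U) (d : E) :
    ∃ ε : ℝ, 0 < ε ∧ ∀ t : ℝ, |t| ≤ ε → q + t • d ∈ U := by
  have hc : Continuous fun t : ℝ => q + t • d := by fun_prop
  have : (fun t : ℝ => q + t • d) ⁻¹' U ∈ nhds (0 : ℝ) :=
    (hU.preimage hc).mem_nhds (by simpa using hq)
  obtain ⟨ε, hε, h⟩ := Metric.mem_nhds_iff.1 this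
  refine ⟨ε / 2, by positivity, fun t ht => h ?_⟩
  rw [mem_ball_zero_iff, Real.norm_eq_abs]
  linarith

lemma inner_lt_of_mem_interior {L : Set E} {z p q : E} (hz : z ≠ 0)
    (hmax : ∀ y ∈ L, ⟪z, y⟫ ≤ ⟪z, p⟫) (hq : q ∈ interior L) : ⟪z, q⟫ < ⟪z, p⟫ := by
  obtain ⟨ε, hε, h⟩ := exists_small_mem isOpen_interior hq z
  have := hmax _ (interior_subset (h ε (abs_of_pos hε).le))
  rw [inner_add_right, inner_smul_right] at this
  have hz2 : 0 < ⟪z, z⟫ := real_inner_self_pos.2 hz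
  nlinarith [mul_pos hε hz2]

/-- Among the lines of direction `d` in the plane `q + span {w, d}` that lie on the `w`-side of the
interior point `q`, the last one meeting `L` supports `L`. -/
lemma exists_support_line {L : Set E} (hL : IsCompact L) {q z w d : E} (hq : q ∈ interior L)
    (hzd : ⟪z, d⟫ = 0) (hzw : 0 < ⟪z, w⟫) :
    ∃ s t : ℝ, 0 < s ∧ q + s • w + t • d ∈ L ∧
      ∀ t' : ℝ, q + s • w + t • d + t' • d ∉ interior L := by
  have hfd : FiniteDimensional ℝ (Submodule.span ℝ ({w, d} : Set E)) :=
    FiniteDimensional.span_of_finite ℝ (by simp)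
  set Z : Set E := L ∩ {y | y - q ∈ Submodule.span ℝ ({w, d} : Set E)} with hZ
  have hcl : IsClosed {y : E | y - q ∈ Submodule.span ℝ ({w, d} : Set E)} :=
    (Submodule.closed_of_finiteDimensional (Submodule.span ℝ ({w, d} : Set E))).preimage
      (by fun_prop : Continuous fun y : E => y - q)
  have hmem : ∀ s t : ℝ, q + s • w + t • d ∈ L → q + s • w + t • d ∈ Z := fun s t h =>
    ⟨h, Submodule.mem_span_pair.2 ⟨s, t, by module⟩⟩
  have hZc : IsCompact Z := hL.inter_right hcl
  have hqZ : q ∈ Z := ⟨interior_subset hq, by simp⟩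
  obtain ⟨y, hyZ, hy⟩ := hZc.exists_isMaxOn ⟨q, hqZ⟩
    (by fun_prop : Continuous fun y : E => ⟪z, y⟫).continuousOn
  obtain ⟨s, t, hst⟩ := Submodule.mem_span_pair.1 hyZ.2
  have hyst : y = q + s • w + t • d := by rw [add_assoc, hst]; abel
  have hval : ∀ s t : ℝ, ⟪z, q + s • w + t • d⟫ = ⟪z, q⟫ + s * ⟪z, w⟫ := by
    intro s t
    simp [inner_add_right, inner_smul_right, hzd]
  have key : ∀ s' t' : ℝ, q + s' • w + t' • d ∈ interior L → s' < s := by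
    intro s' t' h
    obtain ⟨ε, hε, hε'⟩ := exists_small_mem isOpen_interior h w
    have h1 : q + (s' + ε) • w + t' • d ∈ L := by
      have := interior_subset (hε' ε (abs_of_pos hε).le)
      convert this using 1
      module
    have h2 : ⟪z, q + (s' + ε) • w + t' • d⟫ ≤ ⟪z, y⟫ := hy (hmem _ _ h1)
    rw [hyst, hval, hval] at h2
    have : s' + ε ≤ s := le_of_mul_le_mul_right (by linarith) hzw
    linarith
  refine ⟨s, t, key 0 0 (by simpa using hq), hyst ▸ hyZ.1, fun t' h => ?_⟩
  have hint : q + s • w + (t + t') • d ∈ interior L := by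
    convert h using 1
    module
  exact lt_irrefl _ (key _ _ hint)

/-! ### Sections of `K` by supporting hyperplanes of `L` are balls -/

/-- All non-horizontal lines supporting `L` cut chords of length exactly `lam` from `K`. -/
def ConstChords (K L : Set E) (v : E) (lam : ℝ) : Prop :=
  ∀ a ∈ L, ∀ u : E, ⟪v, u⟫ ≠ 0 → (∀ t : ℝ, a + t • u ∉ interior L) →
    (∃ s t : ℝ, a + s • u ∈ K ∧ a + t • u ∈ K ∧ (t - s) * ‖u‖ = lam) ∧
    ∀ s t : ℝ, a + s • u ∈ K → a + t • u ∈ K → (t - s) * ‖u‖ ≤ lam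

/-- In a supporting hyperplane of `L`, non-horizontal chords of `K` have length at most `lam`.
The length of the chords of a fixed direction is a concave function, equal to `lam` on the two
lines supporting `L` in the plane spanned by the chord and an interior point of `L`; hence it is
at most `lam` beyond them. -/
lemma chord_le_aux {K L : Set E} {v : E} {lam : ℝ} (hN : ConstChords K L v lam)
    (hK : Convex ℝ K) (hL : IsCompact L) {q z p b₁ b₂ : E} (hq : q ∈ interior L) (hz : z ≠ 0)
    (hmax : ∀ y ∈ L, ⟪z, y⟫ ≤ ⟪z, p⟫) (hb₁ : b₁ ∈ K) (hb₂ : b₂ ∈ K)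
    (hz₁ : ⟪z, b₁⟫ = ⟪z, p⟫) (hz₂ : ⟪z, b₂⟫ = ⟪z, p⟫) (hnh : ⟪v, b₂ - b₁⟫ ≠ 0) :
    ‖b₂ - b₁‖ ≤ lam := by
  set d := b₂ - b₁ with hd
  set w := b₁ - q with hw
  have hzd : ⟪z, d⟫ = 0 := by rw [hd, inner_sub_right, hz₁, hz₂, sub_self]
  have hzw : 0 < ⟪z, w⟫ := by
    rw [hw, inner_sub_right, hz₁]
    linarith [inner_lt_of_mem_interior hz hmax hq]
  obtain ⟨s, t, hs, hyL, hy⟩ := exists_support_line hL hq hzd hzw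
  obtain ⟨s', t', hs', hyL', hy'⟩ := exists_support_line (z := -z) (w := -w) hL hq
    (by rw [inner_neg_left, hzd, neg_zero]) (by simpa using hzw)
  have hs1 : s ≤ 1 := by
    have h := hmax _ hyL
    have : ⟪z, p⟫ = ⟪z, q⟫ + ⟪z, w⟫ := by rw [hw, inner_sub_right, hz₁]; ring
    rw [this] at h
    simp only [inner_add_right, inner_smul_right, hzd] at h
    exact le_of_mul_le_mul_right (by linarith) hzw
  obtain ⟨⟨α, β, hα, hβ, hαβ⟩, -⟩ := hN _ hyL' d hnh hy'
  obtain ⟨-, hle⟩ := hN _ hyL d hnh hy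
  set θ := (s + s') / (1 + s') with hθ
  have h1s : 0 < 1 + s' := by linarith
  have hθ0 : 0 < θ := by positivity
  have hθ1 : θ ≤ 1 := by rw [hθ, div_le_one h1s]; linarith
  have hθs : s = (1 - θ) * (-s') + θ := by rw [hθ]; field_simp; ring
  have e₁ : q + s • w + t • d + ((1 - θ) * (t' + α) - t) • d ∈ K := by
    have := hK hα hb₁ (sub_nonneg.2 hθ1) hθ0.le (by ring)
    convert this using 1
    have : b₁ = q + w := by rw [hw]; abel
    rw [this, hθs]
    module
  have e₂ : q + s • w + t • d + ((1 - θ) * (t' + β) + θ - t) • d ∈ K := by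
    have := hK hβ hb₂ (sub_nonneg.2 hθ1) hθ0.le (by ring)
    convert this using 1
    have : b₂ = q + w + d := by rw [hw, hd]; abel
    rw [this, hθs]
    module
  have h := hle _ _ e₁ e₂
  have : θ * ‖d‖ ≤ θ * lam := by
    have e : ((1 - θ) * (t' + β) + θ - t - ((1 - θ) * (t' + α) - t)) * ‖d‖
      = (1 - θ) * ((β - α) * ‖d‖) + θ * ‖d‖ := by ring
    rw [e, hαβ] at h
    linarith
  exact le_of_mul_le_mul_left this hθ0

lemma exists_nonhorizontal {v z : E} (hv : v ≠ 0) (hz : z ∉ Submodule.span ℝ {v}) :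
    ∃ e : E, ⟪z, e⟫ = 0 ∧ ⟪v, e⟫ ≠ 0 := by
  have hz0 : z ≠ 0 := fun h => hz (h ▸ Submodule.zero_mem _)
  have hzz : ⟪z, z⟫ ≠ 0 := (real_inner_self_pos.2 hz0).ne'
  set k := ⟪z, v⟫ / ⟪z, z⟫ with hk
  have h1 : ⟪z, v - k • z⟫ = 0 := by
    rw [inner_sub_right, inner_smul_right, hk]
    field_simp
    ring
  refine ⟨v - k • z, h1, fun h => hz ?_⟩
  have h2 : ⟪v - k • z, v - k • z⟫ = 0 := by
    rw [inner_sub_left, h, inner_smul_left, h1]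
    simp
  have h3 : v = k • z := sub_eq_zero.1 (inner_self_eq_zero.1 h2)
  have hk0 : k ≠ 0 := by
    intro h0
    rw [h0, zero_smul] at h3
    exact hv h3
  refine Submodule.mem_span_singleton.2 ⟨k⁻¹, ?_⟩
  rw [h3, smul_smul, inv_mul_cancel₀ hk0, one_smul]

lemma ne_zero_of_notMem_span {v z : E} (hz : z ∉ Submodule.span ℝ {v}) : z ≠ 0 :=
  fun h => hz (h ▸ Submodule.zero_mem _)

/-- In a non-horizontal supporting hyperplane of `L`, every chord of `K` has length at most `lam`;
horizontal chords are limits of non-horizontal ones, because the contact point is interior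
to `K`. -/
lemma chord_le {K L : Set E} {v : E} {lam : ℝ} (hN : ConstChords K L v lam) (hv : v ≠ 0)
    (hK : Convex ℝ K) (hL : IsCompact L) (hLK : L ⊆ interior K) {q z p b₁ b₂ : E}
    (hq : q ∈ interior L) (hz : z ∉ Submodule.span ℝ {v}) (hp : p ∈ L)
    (hmax : ∀ y ∈ L, ⟪z, y⟫ ≤ ⟪z, p⟫) (hb₁ : b₁ ∈ K) (hb₂ : b₂ ∈ K)
    (hz₁ : ⟪z, b₁⟫ = ⟪z, p⟫) (hz₂ : ⟪z, b₂⟫ = ⟪z, p⟫) :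
    ‖b₂ - b₁‖ ≤ lam := by
  have hz0 := ne_zero_of_notMem_span hz
  by_cases hnh : ⟪v, b₂ - b₁⟫ = 0
  swap
  · exact chord_le_aux hN hK hL hq hz0 hmax hb₁ hb₂ hz₁ hz₂ hnh
  obtain ⟨e, hze, hve⟩ := exists_nonhorizontal hv hz
  obtain ⟨δ, hδ, hδK⟩ := exists_small_mem isOpen_interior (hLK hp) e
  obtain ⟨t, ht, htv⟩ : ∃ t : ℝ, p + t • e ∈ K ∧ ⟪v, p + t • e - b₁⟫ ≠ 0 := by
    by_contra! hcon
    have h1 := hcon δ (interior_subset (hδK δ (abs_of_pos hδ).le))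
    have h2 := hcon 0 (by simpa using interior_subset (hLK hp))
    simp only [inner_sub_right, inner_add_right, inner_smul_right] at h1 h2
    have : δ * ⟪v, e⟫ = 0 := by linarith
    exact (mul_ne_zero hδ.ne' hve) this
  have hlim : Filter.Tendsto (fun ε : ℝ => ‖b₂ - (b₁ + ε • (p + t • e - b₁))‖)
      (nhdsWithin 0 (Ioi 0)) (nhds ‖b₂ - b₁‖) := by
    have : Continuous (fun ε : ℝ => ‖b₂ - (b₁ + ε • (p + t • e - b₁))‖) := by fun_prop
    have h := this.tendsto 0
    simp only [zero_smul, add_zero] at h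
    exact h.mono_left nhdsWithin_le_nhds
  refine le_of_tendsto hlim ?_
  filter_upwards [Ioo_mem_nhdsGT (zero_lt_one' ℝ)] with ε hε
  have hmem : b₁ + ε • (p + t • e - b₁) ∈ K := hK.add_smul_sub_mem hb₁ ht ⟨hε.1.le, hε.2.le⟩
  refine chord_le_aux hN hK hL hq hz0 hmax hmem hb₂ ?_ hz₂ ?_
  · simp [inner_add_right, inner_sub_right, inner_smul_right, hze, hz₁]
  · have : b₂ - (b₁ + ε • (p + t • e - b₁)) = (b₂ - b₁) - ε • (p + t • e - b₁) := by abel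
    rw [this, inner_sub_right, hnh, inner_smul_right, zero_sub]
    exact neg_ne_zero.2 (mul_ne_zero hε.1.ne' htv)

/-- The chord through the contact point `p` in direction `u` spans the extent of the section of `K`
in that direction: its endpoints are `p + r • u` and `p - (lam - r) • u`. -/
def IsRadius (K : Set E) (z p : E) (lam : ℝ) (u : E) (r : ℝ) : Prop :=
  p + r • u ∈ K ∧ p - (lam - r) • u ∈ K ∧
    ∀ x ∈ K, ⟪z, x⟫ = ⟪z, p⟫ → ⟪x - p, u⟫ ≤ r ∧ -(lam - r) ≤ ⟪x - p, u⟫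

/-- A chord through `p` of length `lam`, the diameter of the section, is a double normal. -/
lemma exists_radius {K L : Set E} {v : E} {lam : ℝ} (hN : ConstChords K L v lam) (hv : v ≠ 0)
    (hK : Convex ℝ K) (hKc : IsClosed K) (hL : IsCompact L) (hLK : L ⊆ interior K) {q z p : E}
    (hq : q ∈ interior L) (hz : z ∉ Submodule.span ℝ {v}) (hp : p ∈ L)
    (hmax : ∀ y ∈ L, ⟪z, y⟫ ≤ ⟪z, p⟫) {u : E} (hu : ‖u‖ = 1) (hzu : ⟪z, u⟫ = 0) :
    ∃ r ∈ Icc 0 lam, IsRadius K z p lam u r := by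
  have hz0 := ne_zero_of_notMem_span hz
  have hpK : p ∈ K := interior_subset (hLK hp)
  have main : ∀ u : E, ‖u‖ = 1 → ⟪z, u⟫ = 0 → ⟪v, u⟫ ≠ 0 →
      ∃ r ∈ Icc 0 lam, IsRadius K z p lam u r := by
    intro u hu hzu hvu
    have huu : ⟪u, u⟫ = 1 := by rw [real_inner_self_eq_norm_sq, hu, one_pow]
    obtain ⟨⟨s, t, hs, ht, hst⟩, -⟩ := hN p hp u hvu (fun t ht => by
      have := inner_lt_of_mem_interior hz0 hmax ht
      rw [inner_add_right, inner_smul_right, hzu] at this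
      linarith)
    rw [hu, mul_one] at hst
    have hr : IsRadius K z p lam u t := by
      refine ⟨ht, ?_, fun x hx hxz => ?_⟩
      · convert hs using 1
        rw [← hst]
        module
      · have h1 : ‖x - (p + s • u)‖ ≤ lam := chord_le hN hv hK hL hLK hq hz hp hmax hs hx
          (by rw [inner_add_right, inner_smul_right, hzu]; ring) hxz
        have h2 : ‖p + t • u - x‖ ≤ lam := chord_le hN hv hK hL hLK hq hz hp hmax hx ht
          hxz (by rw [inner_add_right, inner_smul_right, hzu]; ring)
        have h3 := real_inner_le_norm (x - (p + s • u)) u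
        have h4 := real_inner_le_norm (p + t • u - x) u
        rw [hu, mul_one] at h3 h4
        have e3 : ⟪x - (p + s • u), u⟫ = ⟪x - p, u⟫ - s := by
          rw [← sub_sub, inner_sub_left, inner_smul_left, huu]; simp
        have e4 : ⟪p + t • u - x, u⟫ = t - ⟪x - p, u⟫ := by
          have : p + t • u - x = t • u - (x - p) := by abel
          rw [this, inner_sub_left, inner_smul_left, huu]; simp
        constructor <;> linarith
    have := hr.2.2 p hpK rfl
    rw [sub_self, inner_zero_left] at this
    exact ⟨t, ⟨this.1, by linarith [this.2]⟩, hr⟩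
  by_cases hvu : ⟪v, u⟫ = 0
  swap
  · exact main u hu hzu hvu
  -- horizontal directions: the condition is closed in `u`, since `r` ranges over a compact interval
  have hclosed : IsClosed (Prod.snd '' {x : Icc (0 : ℝ) lam × E | IsRadius K z p lam x.2 x.1}) := by
    refine isClosedMap_snd_of_compactSpace _ ?_
    have h1 : IsClosed {x : Icc (0 : ℝ) lam × E | p + (x.1 : ℝ) • x.2 ∈ K} :=
      hKc.preimage (by fun_prop)
    have h2 : IsClosed {x : Icc (0 : ℝ) lam × E | p - (lam - (x.1 : ℝ)) • x.2 ∈ K} :=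
      hKc.preimage (by fun_prop)
    have h3 : IsClosed {x : Icc (0 : ℝ) lam × E | ∀ y ∈ K, ⟪z, y⟫ = ⟪z, p⟫ →
        ⟪y - p, x.2⟫ ≤ (x.1 : ℝ) ∧ -(lam - (x.1 : ℝ)) ≤ ⟪y - p, x.2⟫} := by
      simp only [ofPred_forall]
      refine isClosed_iInter fun y => isClosed_iInter fun _ => isClosed_iInter fun _ => ?_
      have g1 : Continuous fun x : Icc (0 : ℝ) lam × E => ⟪y - p, x.2⟫ := by fun_prop
      have g2 : Continuous fun x : Icc (0 : ℝ) lam × E => (x.1 : ℝ) := by fun_prop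
      have g3 : Continuous fun x : Icc (0 : ℝ) lam × E => -(lam - (x.1 : ℝ)) := by fun_prop
      exact (isClosed_le g1 g2).inter (isClosed_le g3 g1)
    exact h1.inter (h2.inter h3)
  obtain ⟨e, hze, hve⟩ := exists_nonhorizontal hv hz
  have hu0 : u ≠ 0 := by rintro rfl; simp at hu
  have hlim : Filter.Tendsto (fun t : ℝ => ‖u + t • e‖⁻¹ • (u + t • e))
      (nhdsWithin 0 (Ioi 0)) (nhds u) := by
    have : ContinuousAt (fun t : ℝ => ‖u + t • e‖⁻¹ • (u + t • e)) 0 := by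
      refine ContinuousAt.smul (ContinuousAt.inv₀ (by fun_prop) (by simpa using hu0)) (by fun_prop)
    have h := this.tendsto
    simp only [zero_smul, add_zero, hu, inv_one, one_smul] at h
    exact h.mono_left nhdsWithin_le_nhds
  have hmem := hclosed.mem_of_tendsto hlim (by
    filter_upwards [self_mem_nhdsWithin] with t ht
    have hvt : ⟪v, u + t • e⟫ ≠ 0 := by
      rw [inner_add_right, hvu, inner_smul_right, zero_add]
      exact mul_ne_zero (ne_of_gt ht) hve
    have hne : u + t • e ≠ 0 := by
      intro h
      rw [h, inner_zero_right] at hvt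
      exact hvt rfl
    obtain ⟨r, hr, hr'⟩ := main (‖u + t • e‖⁻¹ • (u + t • e))
      (by rw [norm_smul, norm_inv, norm_norm, inv_mul_cancel₀ (norm_ne_zero_iff.2 hne)])
      (by simp [inner_smul_right, inner_add_right, hzu, hze])
      (by rw [inner_smul_right]; exact mul_ne_zero (by simpa using hne) hvt)
    exact ⟨(⟨r, hr⟩, _), hr', rfl⟩)
  obtain ⟨⟨r, u'⟩, hr, rfl⟩ := hmem
  exact ⟨r, r.2, hr⟩

lemma const_of_quadratic {φ : ℝ → ℝ} {C : ℝ} (h : ∀ x y, |φ x - φ y| ≤ C * (x - y) ^ 2)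
    (x y : ℝ) : φ x = φ y := by
  have hd : ∀ x, HasDerivAt φ 0 x := by
    intro x
    rw [hasDerivAt_iff_isLittleO]
    have h1 : (fun x' => φ x' - φ x - (x' - x) • (0 : ℝ)) =O[nhds x] fun x' => ‖x' - x‖ ^ 2 := by
      refine Asymptotics.IsBigO.of_bound C (Filter.Eventually.of_forall fun x' => ?_)
      simpa using h x' x
    exact h1.trans_isLittleO (Asymptotics.isLittleO_pow_sub_sub x one_lt_two)
  exact is_const_of_deriv_eq_zero (fun x => (hd x).differentiableAt) (fun x => (hd x).deriv) x y

/-- Every non-horizontal supporting hyperplane of `L` cuts `K` in a ball of radius `lam / 2` about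
the contact point. Along a great circle of directions the radius `φ` of the section satisfies
`φ θ' * cos (θ' - θ) ≤ φ θ`, hence has zero derivative, and antipodal radii add up to `lam`. -/
lemma section_eq_ball [FiniteDimensional ℝ E] (hdim : 3 ≤ Module.finrank ℝ E)
    {K L : Set E} {v : E} {lam : ℝ} (hN : ConstChords K L v lam) (hv : v ≠ 0)
    (hK : Convex ℝ K) (hKc : IsClosed K) (hL : IsCompact L) (hLK : L ⊆ interior K) {q z p : E}
    (hq : q ∈ interior L) (hz : z ∉ Submodule.span ℝ {v}) (hp : p ∈ L)
    (hmax : ∀ y ∈ L, ⟪z, y⟫ ≤ ⟪z, p⟫) {x : E} (hx : ⟪z, x⟫ = ⟪z, p⟫) :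
    x ∈ K ↔ ‖x - p‖ ≤ lam / 2 := by
  have hpK : p ∈ K := interior_subset (hLK hp)
  have hrad : ∀ u : E, ‖u‖ = 1 → ⟪z, u⟫ = 0 → IsRadius K z p lam u (lam / 2) ∧ 0 ≤ lam := by
    intro u hu hzu
    obtain ⟨f, hf, hzf, huf⟩ := exists_unit_orth hdim z u
    have huu : ⟪u, u⟫ = 1 := by rw [real_inner_self_eq_norm_sq, hu, one_pow]
    have hff : ⟪f, f⟫ = 1 := by rw [real_inner_self_eq_norm_sq, hf, one_pow]
    have hfu : ⟪f, u⟫ = 0 := by rw [real_inner_comm, huf]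
    set c : ℝ → E := fun θ => Real.cos θ • u + Real.sin θ • f with hc
    have hin : ∀ a b, ⟪c a, c b⟫ = Real.cos (a - b) := by
      intro a b
      simp only [hc, inner_add_left, inner_add_right, inner_smul_left, inner_smul_right, huu, hff,
        hfu, huf, Real.cos_sub]
      simp
      ring
    have hc1 : ∀ θ, ‖c θ‖ = 1 := by
      intro θ
      have := hin θ θ
      rw [sub_self, Real.cos_zero, real_inner_self_eq_norm_sq] at this
      exact (pow_eq_one_iff_of_nonneg (norm_nonneg _) two_ne_zero).1 this
    have hzc : ∀ θ, ⟪z, c θ⟫ = 0 := by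
      intro θ
      simp [hc, inner_add_right, inner_smul_right, hzu, hzf]
    choose φ hφI hφ using fun θ => exists_radius hN hv hK hKc hL hLK hq hz hp hmax (hc1 θ) (hzc θ)
    have hφc : ∀ a b, φ a * Real.cos (a - b) ≤ φ b := by
      intro a b
      have := ((hφ b).2.2 _ (hφ a).1 (by
        rw [inner_add_right, inner_smul_right, hzc]; ring)).1
      rwa [add_sub_cancel_left, inner_smul_left, hin] at this
    have hquad : ∀ a b, φ a - φ b ≤ lam / 2 * (a - b) ^ 2 := by
      intro a b
      have h1 := Real.one_sub_sq_div_two_le_cos (x := a - b)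
      have h2 := hφc a b
      have h3 := mul_le_mul_of_nonneg_left h1 (hφI a).1
      have h4 := mul_le_mul_of_nonneg_right (hφI a).2 (sq_nonneg (a - b))
      linarith
    have hconst := const_of_quadratic (φ := φ) (C := lam / 2) (fun a b => by
      rw [abs_le]
      have h1 := hquad a b
      have h2 := hquad b a
      have : (b - a) ^ 2 = (a - b) ^ 2 := by ring
      rw [this] at h2
      constructor <;> linarith)
    have hc0 : c 0 = u := by simp [hc]
    have hcπ : c Real.pi = -u := by simp [hc]
    have h0 := hφ 0
    have hπ := hφ Real.pi
    rw [hconst Real.pi 0, hcπ] at hπ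
    rw [hc0] at h0
    have e1 := (hπ.2.2 _ h0.2.1 (by
      rw [inner_sub_right, inner_smul_right, hzu]; ring)).1
    have e2 := (h0.2.2 _ hπ.1 (by
      rw [inner_add_right, inner_smul_right, inner_neg_right, hzu]; ring)).2
    have e1' : lam - φ 0 ≤ φ 0 := by
      have : p - (lam - φ 0) • u - p = (lam - φ 0) • (-u) := by module
      rw [this, inner_smul_left, inner_neg_neg, huu] at e1
      simpa using e1
    have e2' : φ 0 ≤ lam - φ 0 := by
      have : p + φ 0 • -u - p = (-φ 0) • u := by module
      rw [this, inner_smul_left, huu] at e2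
      simp at e2
      linarith
    have : φ 0 = lam / 2 := by linarith
    rw [this] at h0
    exact ⟨h0, (hφI 0).1.trans (hφI 0).2⟩
  by_cases hxp : x - p = 0
  · obtain ⟨f, hf, hzf, -⟩ := exists_unit_orth hdim z 0
    rw [hxp, norm_zero, sub_eq_zero.1 hxp]
    exact ⟨fun _ => by linarith [(hrad f hf hzf).2], fun _ => hpK⟩
  have hn : ‖x - p‖ ≠ 0 := norm_ne_zero_iff.2 hxp
  set u := ‖x - p‖⁻¹ • (x - p) with hu
  have hxu : x = p + ‖x - p‖ • u := by
    rw [hu, smul_smul, mul_inv_cancel₀ hn, one_smul]; abel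
  have hu1 : ‖u‖ = 1 := by simp [hu, norm_smul, hn]
  have hzu : ⟪z, u⟫ = 0 := by simp [hu, inner_smul_right, inner_sub_right, hx]
  obtain ⟨hr, hlam⟩ := hrad u hu1 hzu
  constructor
  · intro hxK
    have := (hr.2.2 x hxK hx).1
    have e : ⟪x - p, u⟫ = ‖x - p‖ := by
      rw [hu, inner_smul_right, real_inner_self_eq_norm_sq]
      field_simp
    rwa [e] at this
  · intro hle
    have hl0 : 0 < lam / 2 := lt_of_lt_of_le (lt_of_le_of_ne (norm_nonneg _) hn.symm) hle
    have := hK.add_smul_sub_mem hpK hr.1 (t := ‖x - p‖ / (lam / 2))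
      ⟨by positivity, (div_le_one hl0).2 hle⟩
    convert this using 1
    rw [add_sub_cancel_left, smul_smul, div_mul_cancel₀ _ hl0.ne']
    exact hxu

end Sections

section Rigidity
variable {E : Type*} [NormedAddCommGroup E] [InnerProductSpace ℝ E]

/-! ### Contact points depend affinely on the normal -/

/-- Every non-horizontal supporting hyperplane of `L` cuts `K` in a ball of radius `ρ` about
every contact point. -/
def BallSections (K L : Set E) (v : E) (ρ : ℝ) : Prop :=
  ∀ z ∉ Submodule.span ℝ {v}, ∀ p ∈ L, (∀ y ∈ L, ⟪z, y⟫ ≤ ⟪z, p⟫) →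
    ∀ x, ⟪z, x⟫ = ⟪z, p⟫ → (x ∈ K ↔ ‖x - p‖ ≤ ρ)

/-- The section of `K` cannot be a ball of radius `ρ` about two different centers. -/
lemma contact_unique {K L : Set E} {v : E} {ρ : ℝ} (hB : BallSections K L v ρ) (hLK : L ⊆ K)
    {z p p' : E} (hz : z ∉ Submodule.span ℝ {v}) (hp : p ∈ L)
    (hmax : ∀ y ∈ L, ⟪z, y⟫ ≤ ⟪z, p⟫) (hp' : p' ∈ L) (hmax' : ∀ y ∈ L, ⟪z, y⟫ ≤ ⟪z, p'⟫) :
    p' = p := by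
  by_contra hne
  have heq : ⟪z, p⟫ = ⟪z, p'⟫ := le_antisymm (hmax' _ hp) (hmax _ hp')
  have hρ : 0 ≤ ρ := by simpa using (hB z hz p hp hmax p rfl).1 (hLK hp)
  have hn : 0 < ‖p - p'‖ := norm_pos_iff.2 (sub_ne_zero.2 (Ne.symm hne))
  -- the point of the first ball farthest from `p'`
  set x := p + (ρ / ‖p - p'‖) • (p - p') with hx
  have hzx : ⟪z, x⟫ = ⟪z, p⟫ := by
    rw [hx, inner_add_right, inner_smul_right, inner_sub_right, heq]; ring
  have hxK : x ∈ K := by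
    rw [hB z hz p hp hmax x hzx, hx, add_sub_cancel_left, norm_smul, Real.norm_eq_abs,
      abs_of_nonneg (by positivity), div_mul_cancel₀ _ hn.ne']
  have h := (hB z hz p' hp' hmax' x (hzx.trans heq)).1 hxK
  have e : x - p' = (1 + ρ / ‖p - p'‖) • (p - p') := by rw [hx]; module
  rw [e, norm_smul, Real.norm_eq_abs, abs_of_nonneg (by positivity), add_mul,
    div_mul_cancel₀ _ hn.ne'] at h
  linarith

lemma contact_continuousAt {K L : Set E} {v : E} {ρ : ℝ} (hB : BallSections K L v ρ) (hLK : L ⊆ K)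
    (hL : IsCompact L) {P : E → E} (hP : ∀ z, P z ∈ L) (hPmax : ∀ z, ∀ y ∈ L, ⟪z, y⟫ ≤ ⟪z, P z⟫)
    {z : E} (hz : z ∉ Submodule.span ℝ {v}) : ContinuousAt P z := by
  refine hL.le_nhds_of_unique_clusterPt (Filter.mem_map.2 (Filter.univ_mem' hP)) ?_
  intro y hy hcl
  refine contact_unique hB hLK hz (hP z) (hPmax z) hy fun x hx => ?_
  by_contra! hlt
  have hopen : ∀ᶠ w : E × E in nhds (z, y), ⟪w.1, w.2⟫ < ⟪w.1, x⟫ :=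
    (isOpen_lt (by fun_prop : Continuous fun w : E × E => ⟪w.1, w.2⟫)
      (by fun_prop : Continuous fun w : E × E => ⟪w.1, x⟫)).mem_nhds hlt
  rw [nhds_prod_eq] at hopen
  obtain ⟨A, hA, B, hB', hAB⟩ := Filter.mem_prod_iff.1 hopen
  have hfr : ∃ᶠ w in nhds z, P w ∈ B := (mapClusterPt_iff_frequently.1 hcl) B hB'
  obtain ⟨w, hwB, hwA⟩ := (hfr.and_eventually hA).exists
  exact absurd (hPmax w x hx) (not_le.2 (hAB (Set.mk_mem_prod hwA hwB)))

/-- A monic quadratic with negative constant term is determined by its sublevel interval. -/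
lemma quadratic_unique {b c b' c' : ℝ} (hc : c < 0) (hc' : c' < 0)
    (h : ∀ t : ℝ, t ^ 2 + 2 * t * b + c ≤ 0 ↔ t ^ 2 + 2 * t * b' + c' ≤ 0) : b = b' ∧ c = c' := by
  have key : ∀ b c t : ℝ, c < 0 → (t ^ 2 + 2 * t * b + c ≤ 0 ↔ |t + b| ≤ √(b ^ 2 - c)) := by
    intro b c t hc
    rw [← Real.sqrt_sq_eq_abs, Real.sqrt_le_sqrt_iff (by nlinarith [sq_nonneg b])]
    constructor <;> intro h <;> nlinarith
  have hs : √(b ^ 2 - c) ^ 2 = b ^ 2 - c := Real.sq_sqrt (by nlinarith [sq_nonneg b])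
  have hs' : √(b' ^ 2 - c') ^ 2 = b' ^ 2 - c' := Real.sq_sqrt (by nlinarith [sq_nonneg b'])
  have h0 := Real.sqrt_nonneg (b ^ 2 - c)
  have h0' := Real.sqrt_nonneg (b' ^ 2 - c')
  simp only [key b c _ hc, key b' c' _ hc'] at h
  set D := √(b ^ 2 - c)
  set D' := √(b' ^ 2 - c')
  have h1 := abs_le.1 ((h (-b + D)).1 (by rw [show -b + D + b = D by ring, abs_of_nonneg h0]))
  have h2 := abs_le.1 ((h (-b - D)).1
    (by rw [show -b - D + b = -D by ring, abs_neg, abs_of_nonneg h0]))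
  have h3 := abs_le.1 ((h (-b' + D')).2
    (by rw [show -b' + D' + b' = D' by ring, abs_of_nonneg h0']))
  have h4 := abs_le.1 ((h (-b' - D')).2
    (by rw [show -b' - D' + b' = -D' by ring, abs_neg, abs_of_nonneg h0']))
  have hb : b = b' := by linarith [h1.1, h1.2, h2.1, h2.2, h3.1, h3.2, h4.1, h4.2]
  have hD : D = D' := by linarith [h1.1, h1.2, h2.1, h2.2, h3.1, h3.2, h4.1, h4.2]
  refine ⟨hb, ?_⟩
  rw [hD, hs', hb] at hs
  linarith

/-- If two supporting hyperplanes of `L` meet inside `K`, the two balls they cut from `K` share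
their intersection with the common flat. Hence some sphere is tangent to both hyperplanes at the
contact points: the normals there meet at equal distance. -/
lemma pair_relation [FiniteDimensional ℝ E] (hdim : 3 ≤ Module.finrank ℝ E)
    {K L : Set E} {v : E} {ρ : ℝ} (hB : BallSections K L v ρ) {ν ν' p p' x₀ : E}
    (hν : ν ∉ Submodule.span ℝ {v}) (hν' : ν' ∉ Submodule.span ℝ {v}) (h1 : ‖ν‖ = 1)
    (h1' : ‖ν'‖ = 1) (hc : 0 ≤ ⟪ν, ν'⟫) (hp : p ∈ L) (hmax : ∀ y ∈ L, ⟪ν, y⟫ ≤ ⟪ν, p⟫)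
    (hp' : p' ∈ L) (hmax' : ∀ y ∈ L, ⟪ν', y⟫ ≤ ⟪ν', p'⟫) (hx₀ : x₀ ∈ interior K)
    (hx : ⟪ν, x₀⟫ = ⟪ν, p⟫) (hx' : ⟪ν', x₀⟫ = ⟪ν', p'⟫) :
    ∃ R : ℝ, p - p' = R • (ν - ν') := by
  have hρ : 0 ≤ ρ := (norm_nonneg _).trans ((hB ν hν p hp hmax x₀ hx).1 (interior_subset hx₀))
  have key : ∀ w : E, ‖w‖ = 1 → ⟪ν, w⟫ = 0 → ⟪ν', w⟫ = 0 →
      ⟪x₀ - p, w⟫ = ⟪x₀ - p', w⟫ ∧ ‖x₀ - p‖ ^ 2 = ‖x₀ - p'‖ ^ 2 := by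
    intro w hw hνw hνw'
    have gen : ∀ n a : E, n ∉ Submodule.span ℝ {v} → a ∈ L → (∀ y ∈ L, ⟪n, y⟫ ≤ ⟪n, a⟫) →
        ⟪n, x₀⟫ = ⟪n, a⟫ → ⟪n, w⟫ = 0 → ∀ t : ℝ, (x₀ + t • w ∈ K ↔
          t ^ 2 + 2 * t * ⟪x₀ - a, w⟫ + (‖x₀ - a‖ ^ 2 - ρ ^ 2) ≤ 0) := by
      intro n a hn ha hma hxa hnw t
      rw [hB n hn a ha hma _ (by rw [inner_add_right, inner_smul_right, hnw, hxa]; ring)]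
      rw [← abs_of_nonneg (norm_nonneg (x₀ + t • w - a)), ← abs_of_nonneg hρ, ← sq_le_sq,
        abs_of_nonneg hρ]
      have e : x₀ + t • w - a = (x₀ - a) + t • w := by abel
      rw [e, norm_add_sq_real, norm_smul, hw, inner_smul_right, mul_one, Real.norm_eq_abs, sq_abs]
      constructor <;> intro h <;> linarith
    have g := gen ν p hν hp hmax hx hνw
    have g' := gen ν' p' hν' hp' hmax' hx' hνw'
    obtain ⟨ε, hε, hεK⟩ := exists_small_mem isOpen_interior hx₀ w
    have m1 := interior_subset (hεK ε (abs_of_pos hε).le)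
    have m2 := interior_subset (hεK (-ε) (by rw [abs_neg, abs_of_pos hε]))
    have k1 := (g _).1 m1
    have k2 := (g _).1 m2
    have k1' := (g' _).1 m1
    have k2' := (g' _).1 m2
    have := quadratic_unique (b := ⟪x₀ - p, w⟫) (b' := ⟪x₀ - p', w⟫)
      (c := ‖x₀ - p‖ ^ 2 - ρ ^ 2) (c' := ‖x₀ - p'‖ ^ 2 - ρ ^ 2)
      (by nlinarith [pow_pos hε 2]) (by nlinarith [pow_pos hε 2])
      (fun t => (g t).symm.trans (g' t))
    exact ⟨this.1, by linarith [this.2]⟩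
  have hspan : p - p' ∈ Submodule.span ℝ ({ν, ν'} : Set E) := by
    rw [← Submodule.orthogonal_orthogonal (Submodule.span ℝ ({ν, ν'} : Set E)),
      Submodule.mem_orthogonal]
    intro w hw
    by_cases hw0 : w = 0
    · rw [hw0, inner_zero_left]
    have hwn : ‖w‖ ≠ 0 := norm_ne_zero_iff.2 hw0
    have e1 := (Submodule.mem_orthogonal _ _).1 hw ν (Submodule.subset_span (by simp))
    have e2 := (Submodule.mem_orthogonal _ _).1 hw ν' (Submodule.subset_span (by simp))
    have := (key (‖w‖⁻¹ • w) (by simp [norm_smul, hwn]) (by rw [inner_smul_right, e1, mul_zero])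
      (by rw [inner_smul_right, e2, mul_zero])).1
    rw [inner_smul_right, inner_smul_right] at this
    have := mul_left_cancel₀ (inv_ne_zero hwn) this
    rw [inner_sub_left, inner_sub_left] at this
    rw [real_inner_comm, inner_sub_left]
    linarith
  obtain ⟨α, β, hαβ⟩ := Submodule.mem_span_pair.1 hspan
  obtain ⟨w, hw, hνw, hνw'⟩ := exists_unit_orth hdim ν ν'
  have hnorm := (key w hw hνw hνw').2
  have n1 : ⟪ν, ν⟫ = 1 := by rw [real_inner_self_eq_norm_sq, h1, one_pow]
  have n2 : ⟪ν', ν'⟫ = 1 := by rw [real_inner_self_eq_norm_sq, h1', one_pow]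
  have n3 : ⟪ν', ν⟫ = ⟪ν, ν'⟫ := real_inner_comm _ _
  have i1 : ⟪ν, p - p'⟫ = α + β * ⟪ν, ν'⟫ := by
    rw [← hαβ, inner_add_right, inner_smul_right, inner_smul_right, n1]; ring
  have i2 : ⟪ν', p - p'⟫ = α * ⟪ν, ν'⟫ + β := by
    rw [← hαβ, inner_add_right, inner_smul_right, inner_smul_right, n2, n3]; ring
  have i3 : ‖p - p'‖ ^ 2 = α ^ 2 + β ^ 2 + 2 * α * β * ⟪ν, ν'⟫ := by
    rw [← real_inner_self_eq_norm_sq]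
    nth_rewrite 1 [← hαβ]
    rw [inner_add_left, inner_smul_left, inner_smul_left, i1, i2]
    simp
    ring
  have i4 : ⟪x₀ - p, p - p'⟫ = -β * (α * ⟪ν, ν'⟫ + β) := by
    have a1 : ⟪x₀ - p, ν⟫ = 0 := by rw [real_inner_comm, inner_sub_right, hx, sub_self]
    have a2 : ⟪x₀ - p, ν'⟫ = -(α * ⟪ν, ν'⟫ + β) := by
      rw [← i2, real_inner_comm, inner_sub_right, inner_sub_right, hx']; ring
    rw [← hαβ, inner_add_right, inner_smul_right, inner_smul_right, a1, a2]; ring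
  have i5 : ‖x₀ - p'‖ ^ 2 = ‖x₀ - p‖ ^ 2 + 2 * ⟪x₀ - p, p - p'⟫ + ‖p - p'‖ ^ 2 := by
    rw [← norm_add_sq_real]; congr 2; abel
  have hsq : (α - β) * (α + β) = 0 := by
    rw [i4, i3] at i5
    nlinarith
  rcases mul_eq_zero.1 hsq with h | h
  · have j1 : 0 ≤ ⟪ν, p - p'⟫ := by rw [inner_sub_right]; linarith [hmax _ hp']
    have j2 : ⟪ν', p - p'⟫ ≤ 0 := by rw [inner_sub_right]; linarith [hmax' _ hp]
    rw [i1] at j1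
    rw [i2] at j2
    have hβ : β = α := by linarith
    subst hβ
    have hβ0 : β = 0 := by nlinarith
    exact ⟨0, by rw [← hαβ, hβ0]; simp⟩
  · refine ⟨α, ?_⟩
    have : β = -α := by linarith
    rw [← hαβ, this]
    module

/-- Two hyperplanes with unit normals at a non-obtuse angle, each leaving the contact point of the other
on its inner side, meet at a point close to the contact points. -/
lemma exists_common_point {ν ν' p p' : E} (h1 : ‖ν‖ = 1) (h1' : ‖ν'‖ = 1) (hc : 0 ≤ ⟪ν, ν'⟫)
    (hne : ν ≠ ν') (hle : ⟪ν, p'⟫ ≤ ⟪ν, p⟫) (hle' : ⟪ν', p⟫ ≤ ⟪ν', p'⟫) :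
    ∃ x₀, ⟪ν, x₀⟫ = ⟪ν, p⟫ ∧ ⟪ν', x₀⟫ = ⟪ν', p'⟫ ∧ ‖x₀ - p‖ ≤ 2 * ‖p' - p‖ := by
  have n1 : ⟪ν, ν⟫ = 1 := by rw [real_inner_self_eq_norm_sq, h1, one_pow]
  have n2 : ⟪ν', ν'⟫ = 1 := by rw [real_inner_self_eq_norm_sq, h1', one_pow]
  have n3 : ⟪ν', ν⟫ = ⟪ν, ν'⟫ := real_inner_comm _ _
  have hc1 : ⟪ν, ν'⟫ < 1 := inner_lt_one_iff_real_of_norm_eq_one h1 h1' |>.2 hne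
  set c := ⟪ν, ν'⟫ with hcdef
  set τ := ⟪ν', p' - p⟫ with hτ
  have hτ0 : 0 ≤ τ := by rw [hτ, inner_sub_right]; linarith
  have hpos : 0 < 1 - c ^ 2 := by nlinarith
  refine ⟨p + (τ / (1 - c ^ 2)) • (ν' - c • ν), ?_, ?_, ?_⟩
  · rw [inner_add_right, inner_smul_right, inner_sub_right, inner_smul_right, n1, ← hcdef]; ring
  · rw [inner_add_right, inner_smul_right, inner_sub_right, inner_smul_right, n2, n3]
    have : τ / (1 - c ^ 2) * (1 - c * c) = τ := by field_simp
    rw [this, hτ, inner_sub_right]; ring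
  · rw [add_sub_cancel_left]
    have hτle : τ ≤ ‖ν' - ν‖ * ‖p' - p‖ := by
      refine le_trans ?_ (real_inner_le_norm _ _)
      rw [inner_sub_left, ← hτ, inner_sub_right (x := ν)]
      linarith
    have hνν : ‖ν' - ν‖ ^ 2 = 2 - 2 * c := by
      rw [norm_sub_sq_real, h1, h1', n3]; ring
    have hww : ‖ν' - c • ν‖ ^ 2 = 1 - c ^ 2 := by
      rw [norm_sub_sq_real, h1', inner_smul_right, n3, norm_smul, h1, Real.norm_eq_abs, mul_one,
        sq_abs]
      ring
    have hτ2 : τ ^ 2 ≤ (2 - 2 * c) * ‖p' - p‖ ^ 2 := by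
      rw [← hνν, ← mul_pow]
      exact pow_le_pow_left₀ hτ0 hτle 2
    refine le_of_sq_le_sq ?_ (by positivity)
    rw [norm_smul, mul_pow, hww, Real.norm_eq_abs, sq_abs, div_pow]
    have : τ ^ 2 / (1 - c ^ 2) ^ 2 * (1 - c ^ 2) = τ ^ 2 / (1 - c ^ 2) := by field_simp
    rw [this, div_le_iff₀ hpos]
    have hP := sq_nonneg ‖p' - p‖
    nlinarith [mul_nonneg (mul_nonneg (sub_nonneg.2 hc1.le) hP) hc,
      mul_nonneg (sub_nonneg.2 hc1.le) hP]

/-- Three distinct unit vectors are not collinear, so the ratios in `pair_relation` agree on a triple. -/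
lemma ratio_unique {a b c p₁ p₂ p₃ : E} {R R' R'' : ℝ} (ha : ‖a‖ = 1) (hb : ‖b‖ = 1)
    (hc : ‖c‖ = 1) (hab : a ≠ b) (hac : a ≠ c) (hbc : b ≠ c) (h₁ : p₁ - p₂ = R • (a - b))
    (h₂ : p₂ - p₃ = R' • (b - c)) (h₃ : p₁ - p₃ = R'' • (a - c)) : R'' = R := by
  by_contra hne
  have hsum : R • (a - b) + R' • (b - c) = R'' • (a - c) := by rw [← h₁, ← h₂, ← h₃]; abel
  have hk : (R - R'') • (a - c) = (R - R') • (b - c) := by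
    have : (R - R'') • (a - c) - (R - R') • (b - c) =
      (R • (a - b) + R' • (b - c)) - R'' • (a - c) := by module
    rw [← sub_eq_zero, this, hsum, sub_self]
  have hR : R - R'' ≠ 0 := sub_ne_zero.2 (Ne.symm hne)
  set k := (R - R'')⁻¹ * (R - R') with hkdef
  have hak : a - c = k • (b - c) := by
    rw [hkdef, mul_smul, ← hk, smul_smul, inv_mul_cancel₀ hR, one_smul]
  have ha2 : a = c + k • (b - c) := by rw [← hak]; abel
  have hcb : ⟪c, b⟫ < 1 := inner_lt_one_iff_real_of_norm_eq_one hc hb |>.2 hbc.symm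
  have hcc : ⟪c, c⟫ = 1 := by rw [real_inner_self_eq_norm_sq, hc, one_pow]
  have hn : ‖a‖ ^ 2 = 1 + 2 * (k * (⟪c, b⟫ - 1)) + k ^ 2 * (2 - 2 * ⟪c, b⟫) := by
    rw [ha2, norm_add_sq_real, inner_smul_right, inner_sub_right, hcc, norm_smul, mul_pow,
      norm_sub_sq_real, hc, hb, real_inner_comm, Real.norm_eq_abs, sq_abs]
    ring
  rw [ha] at hn
  have : k * (k - 1) = 0 := by
    have : (2 - 2 * ⟪c, b⟫) * (k * (k - 1)) = 0 := by linarith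
    exact (mul_eq_zero.1 this).resolve_left (by linarith)
  rcases mul_eq_zero.1 this with h | h
  · rw [h, zero_smul, add_zero] at ha2
    exact hac ha2
  · rw [sub_eq_zero.1 h, one_smul, add_sub_cancel] at ha2
    exact hab ha2

/-- The unit vector in the direction of `z` (zero for `z = 0`). -/
def dir (z : E) : E := ‖z‖⁻¹ • z

lemma norm_dir {z : E} (hz : z ≠ 0) : ‖dir z‖ = 1 := by
  rw [dir, norm_smul, norm_inv, norm_norm, inv_mul_cancel₀ (norm_ne_zero_iff.2 hz)]

lemma norm_smul_dir {z : E} (hz : z ≠ 0) : ‖z‖ • dir z = z := by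
  rw [dir, smul_smul, mul_inv_cancel₀ (norm_ne_zero_iff.2 hz), one_smul]

lemma continuousAt_dir {z : E} (hz : z ≠ 0) : ContinuousAt (dir : E → E) z :=
  ContinuousAt.smul (ContinuousAt.inv₀ (by fun_prop) (norm_ne_zero_iff.2 hz)) continuousAt_id

lemma dir_notMem {v z : E} (hz : z ∉ Submodule.span ℝ {v}) : dir z ∉ Submodule.span ℝ {v} := by
  intro h
  apply hz
  rw [← norm_smul_dir (ne_zero_of_notMem_span hz)]
  exact Submodule.smul_mem _ _ h

lemma exists_dir_ne [FiniteDimensional ℝ E] (hdim : 3 ≤ Module.finrank ℝ E) {z : E}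
    {Q : E → Prop} (hQ : ∀ᶠ z' in nhds z, Q z') : ∃ z', Q z' ∧ dir z ≠ dir z' := by
  obtain ⟨e, he, hze, -⟩ := exists_unit_orth hdim z 0
  obtain ⟨U, hUQ, hU, hzU⟩ := _root_.eventually_nhds_iff.1 hQ
  obtain ⟨ε, hε, h⟩ := exists_small_mem hU hzU e
  refine ⟨z + ε • e, hUQ _ (h ε (abs_of_pos hε).le), fun heq => ?_⟩
  have hee : ⟪e, e⟫ = 1 := by rw [real_inner_self_eq_norm_sq, he, one_pow]
  have h1 : ⟪dir z, e⟫ = 0 := by rw [dir, inner_smul_left, hze, mul_zero]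
  have hne : z + ε • e ≠ 0 := by
    intro h0
    have : ⟪z + ε • e, e⟫ = ε := by rw [inner_add_left, hze, inner_smul_left, hee]; simp
    rw [h0, inner_zero_left] at this
    exact hε.ne this
  rw [heq, dir, inner_smul_left, inner_add_left, hze, inner_smul_left, hee] at h1
  simp at h1
  rcases h1 with h1 | h1
  · exact hne h1
  · exact hε.ne' h1

/-- Near every non-horizontal direction, the contact point is an affine function `c + R • ν` of the
unit normal `ν`. -/
lemma local_affine [FiniteDimensional ℝ E] (hdim : 3 ≤ Module.finrank ℝ E)
    {K L : Set E} {v : E} {ρ : ℝ} (hB : BallSections K L v ρ) (hLK : L ⊆ interior K)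
    (hL : IsCompact L) {P : E → E} (hP : ∀ z, P z ∈ L) (hPmax : ∀ z, ∀ y ∈ L, ⟪z, y⟫ ≤ ⟪z, P z⟫)
    {z₀ : E} (hz₀ : z₀ ∉ Submodule.span ℝ {v}) :
    ∃ (c : E) (R : ℝ), ∀ᶠ z in nhds z₀, P (dir z) = c + R • dir z := by
  have hz00 := ne_zero_of_notMem_span hz₀
  obtain ⟨ε, hε, hεK⟩ := Metric.isOpen_iff.1 isOpen_interior _ (hLK (hP (dir z₀)))
  have hcont : ContinuousAt (fun z => P (dir z)) z₀ :=
    ContinuousAt.comp (contact_continuousAt hB (hLK.trans interior_subset) hL hP hPmax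
      (dir_notMem hz₀)) (continuousAt_dir hz00)
  have hev1 : ∀ᶠ z in nhds z₀, dist (P (dir z)) (P (dir z₀)) < ε / 8 :=
    hcont.eventually (Metric.ball_mem_nhds _ (by positivity))
  have hev2 : ∀ᶠ z in nhds z₀, dist (dir z) (dir z₀) < 1 / 2 :=
    (continuousAt_dir hz00).eventually (Metric.ball_mem_nhds _ (by norm_num))
  have hev3 : ∀ᶠ z in nhds z₀, z ∉ Submodule.span ℝ {v} :=
    (Submodule.closed_of_finiteDimensional (Submodule.span ℝ {v})).isOpen_compl.mem_nhds hz₀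
  have hev := (hev1.and hev2).and hev3
  have pair : ∀ z z', ((dist (P (dir z)) (P (dir z₀)) < ε / 8 ∧ dist (dir z) (dir z₀) < 1 / 2) ∧
      z ∉ Submodule.span ℝ {v}) →
      ((dist (P (dir z')) (P (dir z₀)) < ε / 8 ∧ dist (dir z') (dir z₀) < 1 / 2) ∧
      z' ∉ Submodule.span ℝ {v}) → dir z ≠ dir z' →
      ∃ R : ℝ, P (dir z) - P (dir z') = R • (dir z - dir z') := by
    rintro z z' ⟨⟨h1, h2⟩, h3⟩ ⟨⟨h1', h2'⟩, h3'⟩ hne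
    have u := norm_dir (ne_zero_of_notMem_span h3)
    have u' := norm_dir (ne_zero_of_notMem_span h3')
    have hin : 0 ≤ ⟪dir z, dir z'⟫ := by
      have hd : ‖dir z - dir z'‖ < 1 := by
        rw [← dist_eq_norm]
        linarith [dist_triangle_right (dir z) (dir z') (dir z₀)]
      have := norm_sub_sq_real (dir z) (dir z')
      rw [u, u'] at this
      nlinarith [norm_nonneg (dir z - dir z')]
    obtain ⟨x₀, hx, hx', hxd⟩ := exists_common_point u u' hin hne
      (hPmax (dir z) _ (hP (dir z'))) (hPmax (dir z') _ (hP (dir z)))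
    refine pair_relation hdim hB (dir_notMem h3) (dir_notMem h3') u u' hin (hP _) (hPmax _)
      (hP _) (hPmax _) (hεK ?_) hx hx'
    rw [Metric.mem_ball]
    have t1 := dist_triangle x₀ (P (dir z)) (P (dir z₀))
    have t2 := dist_triangle_right (P (dir z')) (P (dir z)) (P (dir z₀))
    rw [← dist_eq_norm, ← dist_eq_norm] at hxd
    linarith
  have hself := hev.self_of_nhds
  obtain ⟨z₁, hz₁, hne₁⟩ := exists_dir_ne hdim hev
  obtain ⟨R, hR⟩ := pair z₀ z₁ hself hz₁ hne₁
  refine ⟨P (dir z₀) - R • dir z₀, R, ?_⟩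
  filter_upwards [hev] with z hz
  suffices h : P (dir z₀) - P (dir z) = R • (dir z₀ - dir z) by
    rw [smul_sub] at h
    have : P (dir z) = P (dir z₀) - (R • dir z₀ - R • dir z) := by rw [← h]; abel
    rw [this]; abel
  by_cases e0 : dir z₀ = dir z
  · simp [e0]
  by_cases e1 : dir z₁ = dir z
  · rw [← e1, hR]
  obtain ⟨R₁, hR₁⟩ := pair z₁ z hz₁ hz e1
  obtain ⟨R₂, hR₂⟩ := pair z₀ z hself hz e0
  have : R₂ = R := ratio_unique (norm_dir hz00) (norm_dir (ne_zero_of_notMem_span hz₁.2))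
    (norm_dir (ne_zero_of_notMem_span hz.2)) hne₁ e0 e1 hR hR₁ hR₂
  rw [hR₂, this]

/-- The local affine formulas of `local_affine` agree, since the directions off the line `ℝ v` form a
connected set. -/
lemma global_affine [FiniteDimensional ℝ E] (hdim : 3 ≤ Module.finrank ℝ E)
    {K L : Set E} {v : E} {ρ : ℝ} (hB : BallSections K L v ρ) (hLK : L ⊆ interior K)
    (hL : IsCompact L) {P : E → E} (hP : ∀ z, P z ∈ L) (hPmax : ∀ z, ∀ y ∈ L, ⟪z, y⟫ ≤ ⟪z, P z⟫) :
    ∃ (c : E) (R : ℝ), ∀ z ∉ Submodule.span ℝ {v}, P (dir z) = c + R • dir z := by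
  have hrank : 1 < Module.rank ℝ (E ⧸ Submodule.span ℝ {v}) := by
    rw [← Module.finrank_eq_rank]
    have h1 := Submodule.finrank_quotient_add_finrank (Submodule.span ℝ {v})
    have h2 : Module.finrank ℝ (Submodule.span ℝ {v}) ≤ 1 := by
      have h := finrank_span_finset_le_card (R := ℝ) ({v} : Finset E)
      rw [Finset.coe_singleton] at h
      exact h
    exact_mod_cast (by omega : 1 < Module.finrank ℝ (E ⧸ Submodule.span ℝ {v}))
  have hconn := isConnected_compl_of_one_lt_codim hrank
  obtain ⟨z₀, hz₀⟩ := hconn.nonempty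
  obtain ⟨c, R, h₀⟩ := local_affine hdim hB hLK hL hP hPmax hz₀
  refine ⟨c, R, fun z hz => ?_⟩
  have hsub := hconn.isPreconnected.subset_of_closure_inter_subset
    (u := {z | ∀ᶠ z' in nhds z, P (dir z') = c + R • dir z'})
    isOpen_setOfPred_eventually_nhds ⟨z₀, hz₀, h₀⟩ ?_
  · exact (hsub hz).self_of_nhds
  rintro z₁ ⟨hcl, hz₁⟩
  obtain ⟨c', R', h₁⟩ := local_affine hdim hB hLK hL hP hPmax hz₁
  have hev3 : ∀ᶠ z in nhds z₁, z ∉ Submodule.span ℝ {v} :=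
    (Submodule.closed_of_finiteDimensional (Submodule.span ℝ {v})).isOpen_compl.mem_nhds hz₁
  obtain ⟨z₂, h2, h21, h23⟩ := ((mem_closure_iff_frequently.1 hcl).and_eventually
    (h₁.eventually_nhds.and hev3)).exists
  -- the two affine formulas agree near `z₂`, hence coincide
  obtain ⟨z₃, ⟨h3, h3'⟩, hne⟩ := exists_dir_ne hdim
    (Filter.Eventually.and h2 h21)
  have e2 := h2.self_of_nhds.symm.trans h21.self_of_nhds
  have e3 := h3.symm.trans h3'
  have hR : R = R' := by
    by_contra hRR
    have : (R - R') • (dir z₂ - dir z₃) = 0 := by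
      have : (R - R') • (dir z₂ - dir z₃) = (c + R • dir z₂) - (c' + R' • dir z₂)
        - ((c + R • dir z₃) - (c' + R' • dir z₃)) := by module
      rw [this, e2, e3]; abel
    rcases smul_eq_zero.1 this with h | h
    · exact hRR (sub_eq_zero.1 h)
    · exact hne (sub_eq_zero.1 h)
  subst hR
  have hc : c = c' := add_right_cancel e2
  subst hc
  exact h₁

/-! ### Concentric balls -/

/-- Ball sections force `K` and `L` to be concentric balls. -/
lemma concentric_of_ballSections [FiniteDimensional ℝ E] (hdim : 3 ≤ Module.finrank ℝ E)
    {K L : Set E} {v : E} {ρ : ℝ} (hB : BallSections K L v ρ) (hLK : L ⊆ interior K)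
    (hL : IsCompact L) (hLc : Convex ℝ L) {q : E} (hq : q ∈ interior L) :
    ∃ (c : E) (r s : ℝ), K = closedBall c r ∧ L = closedBall c s := by
  have hex : ∀ z : E, ∃ p ∈ L, ∀ y ∈ L, ⟪z, y⟫ ≤ ⟪z, p⟫ := fun z =>
    hL.exists_isMaxOn ⟨q, interior_subset hq⟩
      (by fun_prop : Continuous fun y : E => ⟪z, y⟫).continuousOn
  choose P hP hPmax using hex
  obtain ⟨c, R, hPc⟩ := global_affine hdim hB hLK hL hP hPmax
  set S := Submodule.span ℝ {v} with hS
  have hStop : S ≠ ⊤ := by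
    intro h
    obtain ⟨e, he, hve, -⟩ := exists_unit_orth hdim v 0
    have : e ∈ S := h ▸ Submodule.mem_top
    obtain ⟨k, rfl⟩ := Submodule.mem_span_singleton.1 this
    have : ⟪k • v, k • v⟫ = 0 := by rw [inner_smul_left, hve, mul_zero]
    rw [real_inner_self_eq_norm_sq, he] at this
    norm_num at this
  have hdense : Dense ((S : Set E)ᶜ) := by
    rw [← interior_eq_empty_iff_dense_compl]
    by_contra hne
    exact hStop (S.eq_top_of_nonempty_interior' (nonempty_iff_ne_empty.2 hne))
  have hmax : ∀ z ∉ S, ∀ x ∈ L, ⟪z, x⟫ ≤ ⟪z, c + R • dir z⟫ := by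
    intro z hz x hx
    have h := hPmax (dir z) x hx
    rw [hPc z hz] at h
    have := mul_le_mul_of_nonneg_left h (norm_nonneg z)
    rwa [← real_inner_smul_left, ← real_inner_smul_left,
      norm_smul_dir (ne_zero_of_notMem_span hz)] at this
  have hval : ∀ z : E, z ≠ 0 → ⟪z, c + R • dir z⟫ = ⟪z, c⟫ + R * ‖z‖ := by
    intro z hz
    rw [inner_add_right, inner_smul_right, dir, inner_smul_right, real_inner_self_eq_norm_sq]
    have := norm_ne_zero_iff.2 hz
    field_simp
  obtain ⟨z₀, hz₀⟩ := hdense.nonempty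
  have hz00 : z₀ ≠ 0 := ne_zero_of_notMem_span hz₀
  have hneg : -z₀ ∉ S := fun h => hz₀ (by simpa using S.neg_mem h)
  have hR : 0 < R := by
    have h1 := inner_lt_of_mem_interior hz00 (hmax z₀ hz₀) hq
    have h2 := inner_lt_of_mem_interior (neg_ne_zero.2 hz00) (hmax _ hneg) hq
    rw [hval _ hz00] at h1
    rw [hval _ (neg_ne_zero.2 hz00), inner_neg_left, inner_neg_left, norm_neg] at h2
    have : 0 < R * ‖z₀‖ := by linarith
    exact pos_of_mul_pos_left this (norm_nonneg _)
  have hcL : c ∈ L := by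
    have h1 := hP (dir z₀)
    have h2 := hP (dir (-z₀))
    rw [hPc _ hz₀] at h1
    rw [hPc _ hneg] at h2
    have := hLc h1 h2 (a := 1 / 2) (b := 1 / 2) (by norm_num) (by norm_num) (by norm_num)
    convert this using 1
    simp only [dir, norm_neg]
    module
  have hLball : L = closedBall c R := by
    apply Subset.antisymm
    · intro x hx
      have hcl : IsClosed {z : E | ⟪z, x - c⟫ ≤ R * ‖z‖} :=
        isClosed_le (by fun_prop) (by fun_prop)
      have hall : ∀ z, z ∈ {z : E | ⟪z, x - c⟫ ≤ R * ‖z‖} := by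
        have h : (S : Set E)ᶜ ⊆ {z : E | ⟪z, x - c⟫ ≤ R * ‖z‖} := by
          intro z hz
          have h1 := hmax z hz x hx
          rw [hval z (ne_zero_of_notMem_span hz)] at h1
          rw [mem_ofPred_eq, inner_sub_right]
          linarith
        exact fun z => closure_minimal h hcl (hdense z)
      have := hall (x - c)
      rw [mem_closedBall, dist_eq_norm]
      by_contra! hlt
      have h2 : ⟪x - c, x - c⟫ ≤ R * ‖x - c‖ := this
      rw [real_inner_self_eq_norm_sq] at h2
      nlinarith
    · intro x hx
      rw [mem_closedBall, dist_eq_norm] at hx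
      have hcl : IsClosed {z : E | c + R • z ∈ L} := hL.isClosed.preimage (by fun_prop)
      have h1 : ball (0 : E) 1 ∩ (S : Set E)ᶜ ⊆ {z : E | c + R • z ∈ L} := by
        rintro z ⟨hz1, hz⟩
        have h := hP (dir z)
        rw [hPc _ hz] at h
        have := hLc.add_smul_sub_mem hcL h (t := ‖z‖)
          ⟨norm_nonneg _, (mem_ball_zero_iff.1 hz1).le⟩
        rw [add_sub_cancel_left, smul_comm, norm_smul_dir (ne_zero_of_notMem_span hz)] at this
        exact this
      have h2 : closedBall (0 : E) 1 ⊆ {z : E | c + R • z ∈ L} := by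
        rw [← closure_ball (0 : E) one_ne_zero]
        exact closure_minimal ((hdense.open_subset_closure_inter isOpen_ball).trans
          (closure_minimal h1 hcl)) hcl
      have h3 : R⁻¹ • (x - c) ∈ closedBall (0 : E) 1 := by
        rw [mem_closedBall_zero_iff, norm_smul, norm_inv, Real.norm_eq_abs, abs_of_pos hR,
          inv_mul_le_iff₀ hR, mul_one]
        exact hx
      have h4 : c + R • R⁻¹ • (x - c) ∈ L := h2 h3
      rwa [smul_smul, mul_inv_cancel₀ hR.ne', one_smul, add_sub_cancel] at h4
  have hρ : 0 ≤ ρ := by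
    simpa using (hB z₀ hz₀ _ (by simpa [hPc z₀ hz₀] using hP (dir z₀)) (hmax z₀ hz₀) _ rfl).1
      (by simpa [hPc z₀ hz₀] using interior_subset (hLK (hP (dir z₀))))
  refine ⟨c, √(R ^ 2 + ρ ^ 2), R, ?_, hLball⟩
  ext x
  rw [mem_closedBall, dist_eq_norm, Real.le_sqrt (norm_nonneg _) (by positivity)]
  rcases le_or_gt ‖x - c‖ R with hle | hlt
  · refine ⟨fun _ => ?_, fun _ => interior_subset (hLK ?_)⟩
    · nlinarith [norm_nonneg (x - c), sq_nonneg ρ]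
    · rw [hLball, mem_closedBall, dist_eq_norm]
      exact hle
  -- a unit normal `z` of a supporting hyperplane of `L` through `x`
  set d := ‖x - c‖ with hd
  have hd0 : 0 < d := hR.trans hlt
  obtain ⟨e, he, hxe, hve⟩ := exists_unit_orth hdim (x - c) v
  have hee : ⟪e, e⟫ = 1 := by rw [real_inner_self_eq_norm_sq, he, one_pow]
  have hpos : 0 < 1 - (R / d) ^ 2 := by
    have : R / d < 1 := (div_lt_one hd0).2 hlt
    have : 0 < R / d := by positivity
    nlinarith
  set σ := √(1 - (R / d) ^ 2) with hσ
  have hσ0 : 0 < σ := Real.sqrt_pos.2 hpos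
  have hσ2 : σ ^ 2 = 1 - (R / d) ^ 2 := Real.sq_sqrt hpos.le
  set z := (R / d ^ 2) • (x - c) + σ • e with hz
  have hzS : z ∉ S := by
    intro h
    obtain ⟨k, hk⟩ := Submodule.mem_span_singleton.1 h
    have h1 : ⟪z, e⟫ = σ := by
      rw [hz, inner_add_left, inner_smul_left, inner_smul_left, hxe, hee]; simp
    rw [← hk, inner_smul_left, hve, mul_zero] at h1
    exact hσ0.ne h1
  have hz1 : ‖z‖ = 1 := by
    have : ‖z‖ ^ 2 = 1 := by
      rw [hz, norm_add_sq_real, inner_smul_left, inner_smul_right, hxe, norm_smul, norm_smul, he,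
        ← hd, mul_one, Real.norm_eq_abs, Real.norm_eq_abs, sq_abs, mul_pow, sq_abs, hσ2]
      field_simp
      ring
    exact (pow_eq_one_iff_of_nonneg (norm_nonneg _) two_ne_zero).1 this
  have hdz : dir z = z := by rw [dir, hz1, inv_one, one_smul]
  have hzx : ⟪z, x - c⟫ = R := by
    rw [hz, inner_add_left, inner_smul_left, inner_smul_left, real_inner_self_eq_norm_sq, ← hd,
      real_inner_comm, hxe]
    simp
    field_simp
  have hPz := hP (dir z)
  rw [hPc _ hzS] at hPz
  have hxz : ⟪z, x⟫ = ⟪z, c + R • dir z⟫ := by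
    rw [hval z (ne_zero_of_notMem_span hzS), hz1, ← hzx, inner_sub_right]; ring
  rw [hB z hzS _ hPz (hmax z hzS) x hxz, hdz]
  have hnn : ‖x - (c + R • z)‖ ^ 2 = d ^ 2 - R ^ 2 := by
    rw [← sub_sub, norm_sub_sq_real, inner_smul_right, real_inner_comm, hzx, norm_smul, hz1,
      mul_one, Real.norm_eq_abs, sq_abs, ← hd]
    ring
  rw [← abs_of_nonneg (norm_nonneg (x - (c + R • z))), ← abs_of_nonneg hρ, ← sq_le_sq, hnn,
    abs_of_nonneg hρ]
  constructor <;> intro h <;> linarith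

end Rigidity

/-! ### Supporting lines joining the two hyperplanes -/

section Shadows
variable {E : Type*} [NormedAddCommGroup E] [InnerProductSpace ℝ E]

/-- The central projection of `L` from `x` to the hyperplane `⟪v, ·⟫ = c`, where `L` lies strictly
between `x` and that hyperplane. -/
def shadow (L : Set E) (v : E) (c : ℝ) (x : E) : Set E :=
  {y | ⟪v, y⟫ = c ∧ ∃ τ ∈ Ioo (0 : ℝ) 1, x + τ • (y - x) ∈ L}

variable {L : Set E} {v : E} {c₁ c₂ : ℝ}

lemma inner_segment {x y : E} (hx : ⟪v, x⟫ = c₁) (hy : ⟪v, y⟫ = c₂) (τ : ℝ) :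
    ⟪v, x + τ • (y - x)⟫ = c₁ + τ * (c₂ - c₁) := by
  rw [inner_add_right, inner_smul_right, inner_sub_right, hx, hy]

lemma param_mem_Ioo (hc : c₁ < c₂) (hL : ∀ y ∈ L, c₁ < ⟪v, y⟫ ∧ ⟪v, y⟫ < c₂) {x y : E}
    (hx : ⟪v, x⟫ = c₁) (hy : ⟪v, y⟫ = c₂) {τ : ℝ} (h : x + τ • (y - x) ∈ L) :
    τ ∈ Ioo (0 : ℝ) 1 := by
  have h' := hL _ h
  rw [inner_segment hx hy] at h'
  constructor <;> nlinarith [h'.1, h'.2]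

lemma isCompact_shadow (hLc : IsCompact L) (hc : c₁ < c₂)
    (hL : ∀ y ∈ L, c₁ < ⟪v, y⟫ ∧ ⟪v, y⟫ < c₂) {x : E} (hx : ⟪v, x⟫ = c₁) :
    IsCompact (shadow L v c₂ x) := by
  have himg : shadow L v c₂ x = (fun q => x + ((c₂ - c₁) / (⟪v, q⟫ - c₁)) • (q - x)) '' L := by
    have hc' : c₂ - c₁ ≠ 0 := (sub_pos.2 hc).ne'
    ext y
    constructor
    · rintro ⟨hy, τ, hτ, hq⟩
      refine ⟨_, hq, ?_⟩
      have hτ0 : τ ≠ 0 := hτ.1.ne'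
      simp only [inner_segment hx hy, add_sub_cancel_left, smul_smul]
      have : (c₂ - c₁) / (τ * (c₂ - c₁)) * τ = 1 := by field_simp
      rw [this, one_smul, add_sub_cancel]
    · rintro ⟨q, hq, rfl⟩
      have h1 : 0 < ⟪v, q⟫ - c₁ := sub_pos.2 (hL q hq).1
      have hv : ⟪v, x + ((c₂ - c₁) / (⟪v, q⟫ - c₁)) • (q - x)⟫ = c₂ := by
        rw [inner_add_right, inner_smul_right, inner_sub_right, hx, div_mul_cancel₀ _ h1.ne']
        ring
      have hmem : x + ((⟪v, q⟫ - c₁) / (c₂ - c₁)) •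
          (x + ((c₂ - c₁) / (⟪v, q⟫ - c₁)) • (q - x) - x) ∈ L := by
        rw [add_sub_cancel_left, smul_smul]
        have : (⟪v, q⟫ - c₁) / (c₂ - c₁) * ((c₂ - c₁) / (⟪v, q⟫ - c₁)) = 1 := by
          field_simp
        rwa [this, one_smul, add_sub_cancel]
      exact ⟨hv, _, param_mem_Ioo hc hL hx hv hmem, hmem⟩
  rw [himg]
  refine hLc.image_of_continuousOn ?_
  refine continuousOn_const.add (ContinuousOn.smul (ContinuousOn.div (by fun_prop) (by fun_prop)
    fun q hq => (sub_pos.2 (hL q hq).1).ne') (by fun_prop))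

lemma convex_shadow (hLc : Convex ℝ L) (x : E) : Convex ℝ (shadow L v c₂ x) := by
  rintro y₁ ⟨hy₁, τ₁, hτ₁, h₁⟩ y₂ ⟨hy₂, τ₂, hτ₂, h₂⟩ α β hα hβ hαβ
  refine ⟨?_, ?_⟩
  · rw [inner_add_right, inner_smul_right, inner_smul_right, hy₁, hy₂, ← add_mul, hαβ, one_mul]
  -- the parameter is the weighted harmonic mean of `τ₁` and `τ₂`
  have p₁ := hτ₁.1
  have p₂ := hτ₂.1
  have q₁ := hτ₁.2
  have q₂ := hτ₂.2
  have hD : 0 < α * τ₂ + β * τ₁ := by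
    rcases hα.eq_or_lt with h | h
    · have : β = 1 := by linarith
      rw [← h, this]; linarith
    · have := mul_pos h p₂
      have := mul_nonneg hβ p₁.le
      linarith
  refine ⟨τ₁ * τ₂ / (α * τ₂ + β * τ₁), ⟨by positivity, ?_⟩, ?_⟩
  · rw [div_lt_one hD]
    have hβ' : β = 1 - α := by linarith
    subst hβ'
    rcases hα.eq_or_lt with h | h
    · rw [← h]; nlinarith
    · nlinarith [mul_pos h (mul_pos p₂ (sub_pos.2 q₁)),
        mul_nonneg hβ (mul_pos p₁ (sub_pos.2 q₂)).le]
  · have := hLc h₁ h₂ (a := α * τ₂ / (α * τ₂ + β * τ₁)) (b := β * τ₁ / (α * τ₂ + β * τ₁))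
      (by positivity) (by positivity) (by field_simp)
    convert this using 1
    have e : (α * τ₂ / (α * τ₂ + β * τ₁)) • (x + τ₁ • (y₁ - x)) +
        (β * τ₁ / (α * τ₂ + β * τ₁)) • (x + τ₂ • (y₂ - x)) =
        ((α * τ₂ + β * τ₁) * (α * τ₂ + β * τ₁)⁻¹) • x +
        (τ₁ * τ₂ / (α * τ₂ + β * τ₁)) • (α • y₁ + β • y₂ - (α + β) • x) := by module
    rw [e, mul_inv_cancel₀ hD.ne', hαβ, one_smul]

/-- Projecting the same point of `L` from `x` and from `x'` changes the result by a multiple of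
`x' - x`, so both shadows have the same extent in directions `m` orthogonal to `x' - x`. -/
lemma exists_shadow_transfer {x x' y m : E} (hx : ⟪v, x⟫ = c₁) (hx' : ⟪v, x'⟫ = c₁)
    (hm : ⟪m, x' - x⟫ = 0) (hy : y ∈ shadow L v c₂ x) :
    ∃ y' ∈ shadow L v c₂ x', ⟪m, y'⟫ = ⟪m, y⟫ := by
  obtain ⟨hy, τ, hτ, hq⟩ := hy
  have hτ0 : τ ≠ 0 := hτ.1.ne'
  refine ⟨y + (1 - τ⁻¹) • (x' - x), ⟨?_, τ, hτ, ?_⟩, ?_⟩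
  · rw [inner_add_right, inner_smul_right, inner_sub_right, hx, hx', hy]; ring
  · convert hq using 1
    match_scalars <;> field_simp <;> ring
  · rw [inner_add_right, inner_smul_right, hm]; ring

/-- If the line from `x` to `y` meets the interior of `L`, then `y` is a relative interior point of
the shadow. -/
lemma exists_mem_shadow (hc : c₁ < c₂) (hL : ∀ y ∈ L, c₁ < ⟪v, y⟫ ∧ ⟪v, y⟫ < c₂) {x y d : E}
    (hx : ⟪v, x⟫ = c₁) (hy : ⟪v, y⟫ = c₂) (hd : ⟪v, d⟫ = 0) {τ : ℝ}
    (hτ : x + τ • (y - x) ∈ interior L) :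
    ∃ ε ∈ Ioc (0 : ℝ) 1, y + ε • d ∈ shadow L v c₂ x := by
  have hτ' := param_mem_Ioo hc hL hx hy (interior_subset hτ)
  obtain ⟨ε, hε, h⟩ := exists_small_mem isOpen_interior hτ d
  refine ⟨min ε 1, ⟨lt_min hε one_pos, min_le_right _ _⟩, ?_, τ, hτ', ?_⟩
  · rw [inner_add_right, inner_smul_right, hd, hy]; ring
  · have h0 : 0 < min ε 1 := lt_min hε one_pos
    have := interior_subset (h (τ * min ε 1) (by
      rw [abs_of_pos (mul_pos hτ'.1 h0)]
      exact (mul_le_of_le_one_left h0.le hτ'.2.le).trans (min_le_left _ _)))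
    convert this using 1
    module

/-- A point `y` of the intersection of two shadows that is extreme in a direction `m` orthogonal to
`x' - x` is joined to `x` by a supporting line: the two shadows have equal extent in direction `m`,
so a relative interior point of the first could be moved inside both of them, upwards. -/
lemma notMem_interior_of_max (hLcpt : IsCompact L) (hLc : Convex ℝ L) (hc : c₁ < c₂)
    (hL : ∀ y ∈ L, c₁ < ⟪v, y⟫ ∧ ⟪v, y⟫ < c₂) {x x' y m : E} (hx : ⟪v, x⟫ = c₁)
    (hx' : ⟪v, x'⟫ = c₁) (hm0 : m ≠ 0) (hvm : ⟪v, m⟫ = 0) (hm : ⟪m, x' - x⟫ = 0)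
    (hy : y ∈ shadow L v c₂ x) (hy' : y ∈ shadow L v c₂ x')
    (hmax : ∀ w ∈ shadow L v c₂ x, w ∈ shadow L v c₂ x' → ⟪m, w⟫ ≤ ⟪m, y⟫) (τ : ℝ) :
    x + τ • (y - x) ∉ interior L := by
  intro hτ
  obtain ⟨y₁, hy₁, hy₁max⟩ := (isCompact_shadow hLcpt hc hL hx).exists_isMaxOn ⟨y, hy⟩
    (by fun_prop : Continuous fun y : E => ⟪m, y⟫).continuousOn
  obtain ⟨y₂, hy₂, hy₂eq⟩ := exists_shadow_transfer hx hx' hm hy₁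
  have hlt : ⟪m, y⟫ < ⟪m, y₂⟫ := by
    obtain ⟨ε, hε, h⟩ := exists_mem_shadow hc hL hx hy.1 hvm hτ
    have h1 : ⟪m, y + ε • m⟫ ≤ ⟪m, y₁⟫ := hy₁max h
    rw [inner_add_right, inner_smul_right] at h1
    have := mul_pos hε.1 (real_inner_self_pos.2 hm0)
    rw [hy₂eq]
    linarith
  obtain ⟨ε, hε, h⟩ := exists_mem_shadow (d := y₂ - y) hc hL hx hy.1
    (by rw [inner_sub_right, hy₂.1, hy.1, sub_self]) hτ
  have h1 := hmax _ h ((convex_shadow hLc x').add_smul_sub_mem hy' hy₂ ⟨hε.1.le, hε.2⟩)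
  rw [inner_add_right, inner_smul_right, inner_sub_right] at h1
  have := mul_pos hε.1 (sub_pos.2 hlt)
  linarith

/-- Two sufficiently close points of the first hyperplane are joined to a common point of the second
one by lines supporting `L`. -/
lemma exists_link [FiniteDimensional ℝ E] (hdim : 3 ≤ Module.finrank ℝ E)
    (hLcpt : IsCompact L) (hLc : Convex ℝ L) (hc : c₁ < c₂)
    (hL : ∀ y ∈ L, c₁ < ⟪v, y⟫ ∧ ⟪v, y⟫ < c₂) {q : E} {δ : ℝ} (hδ : ball q δ ⊆ L)
    {x x' : E} (hx : ⟪v, x⟫ = c₁) (hx' : ⟪v, x'⟫ = c₁) (hd : ‖x' - x‖ < δ) :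
    ∃ y, ⟪v, y⟫ = c₂ ∧
      ((∃ τ : ℝ, x + τ • (y - x) ∈ L) ∧ ∀ τ : ℝ, x + τ • (y - x) ∉ interior L) ∧
      ((∃ τ : ℝ, x' + τ • (y - x') ∈ L) ∧ ∀ τ : ℝ, x' + τ • (y - x') ∉ interior L) := by
  obtain ⟨m, hm1, hvm, hxm⟩ := exists_unit_orth hdim v (x' - x)
  have hm0 : m ≠ 0 := by rintro rfl; simp at hm1
  have hmx : ⟪m, x' - x⟫ = 0 := by rw [real_inner_comm, hxm]
  have hmx' : ⟪m, x - x'⟫ = 0 := by rw [← neg_sub, inner_neg_right, hmx, neg_zero]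
  have hδ0 : 0 < δ := (norm_nonneg _).trans_lt hd
  have hq : q ∈ L := hδ (mem_ball_self hδ0)
  -- the projection of `q` from `x` lies in both shadows
  have hne : (shadow L v c₂ x ∩ shadow L v c₂ x').Nonempty := by
    have hqv := hL q hq
    have hc' : 0 < c₂ - c₁ := sub_pos.2 hc
    set τ := (⟪v, q⟫ - c₁) / (c₂ - c₁) with hτ
    have hτ0 : 0 < τ := div_pos (by linarith) hc'
    have hτ1 : τ < 1 := (div_lt_one hc').2 (by linarith)
    have hy : ⟪v, x + τ⁻¹ • (q - x)⟫ = c₂ := by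
      rw [inner_add_right, inner_smul_right, inner_sub_right, hx, hτ, inv_div,
        div_mul_cancel₀ _ (by linarith)]
      ring
    refine ⟨x + τ⁻¹ • (q - x), ⟨hy, τ, ⟨hτ0, hτ1⟩, ?_⟩, hy, τ, ⟨hτ0, hτ1⟩, ?_⟩
    · rwa [add_sub_cancel_left, smul_smul, mul_inv_cancel₀ hτ0.ne', one_smul, add_sub_cancel]
    · have e : x' + τ • (x + τ⁻¹ • (q - x) - x') = q + (1 - τ) • (x' - x) := by
        match_scalars <;> field_simp <;> ring
      rw [e]
      refine hδ ?_
      rw [mem_ball, dist_eq_norm, add_sub_cancel_left, norm_smul, Real.norm_eq_abs,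
        abs_of_pos (by linarith)]
      exact (mul_le_of_le_one_left (norm_nonneg _) (by linarith)).trans_lt hd
  obtain ⟨y, ⟨hy, hy'⟩, hmax⟩ := ((isCompact_shadow hLcpt hc hL hx).inter_right
    (isCompact_shadow hLcpt hc hL hx').isClosed).exists_isMaxOn hne
    (by fun_prop : Continuous fun y : E => ⟪m, y⟫).continuousOn
  obtain ⟨hyv, τ, -, hτ⟩ := id hy
  obtain ⟨-, τ', -, hτ'⟩ := id hy'
  exact ⟨y, hyv,
    ⟨⟨τ, hτ⟩, notMem_interior_of_max hLcpt hLc hc hL hx hx' hm0 hvm hmx hy hy'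
      fun w h h' => hmax ⟨h, h'⟩⟩,
    ⟨τ', hτ'⟩, notMem_interior_of_max hLcpt hLc hc hL hx' hx hm0 hvm hmx' hy' hy
      fun w h h' => hmax ⟨h', h⟩⟩

/-- A function on a hyperplane that takes equal values at any two points closer than `δ` is
constant there. -/
lemma eq_of_locally_eq {f : E → ℝ} {δ : ℝ} (hδ : 0 < δ)
    (h : ∀ x x', ⟪v, x⟫ = c₁ → ⟪v, x'⟫ = c₁ → ‖x' - x‖ < δ → f x = f x') {x x' : E}
    (hx : ⟪v, x⟫ = c₁) (hx' : ⟪v, x'⟫ = c₁) : f x = f x' := by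
  obtain ⟨N, hN⟩ := exists_nat_gt (‖x' - x‖ / δ)
  have hN0 : (0 : ℝ) < N := lt_of_le_of_lt (by positivity) hN
  rw [div_lt_iff₀ hδ] at hN
  have hmem : ∀ k : ℕ, ⟪v, x + ((k : ℝ) / N) • (x' - x)⟫ = c₁ := by
    intro k
    rw [inner_segment hx hx']; ring
  have key : ∀ k : ℕ, f x = f (x + ((k : ℝ) / N) • (x' - x)) := by
    intro k
    induction k with
    | zero => simp
    | succ k ih =>
      refine ih.trans (h _ _ (hmem k) (hmem (k + 1)) ?_)
      have e : x + (((k + 1 : ℕ) : ℝ) / N) • (x' - x) - (x + ((k : ℝ) / N) • (x' - x))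
          = (1 / (N : ℝ)) • (x' - x) := by
        push_cast
        match_scalars <;> field_simp <;> ring
      rw [e, norm_smul, Real.norm_eq_abs, abs_of_pos (by positivity), one_div,
        inv_mul_lt_iff₀ hN0]
      exact hN
  have := key N
  rwa [div_self hN0.ne', one_smul, add_sub_cancel] at this

end Shadows

/-! ### Chords on lines of Euclidean space -/

lemma exists_diam_le_dist {X : Type*} [PseudoMetricSpace X] {s : Set X} (hs : IsCompact s)
    (hne : s.Nonempty) : ∃ x ∈ s, ∃ y ∈ s, Metric.diam s ≤ dist x y := by
  obtain ⟨w, hw, hmax⟩ := (hs.prod hs).exists_isMaxOn (hne.prod hne)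
    (continuous_dist (α := X)).continuousOn
  exact ⟨w.1, hw.1, w.2, hw.2, Metric.diam_le_of_forall_dist_le dist_nonneg fun a ha b hb =>
    isMaxOn_iff.1 hmax (a, b) ⟨ha, hb⟩⟩

section Lines
variable {n : ℕ}

lemma lineThrough_shift (a u : EuclideanSpace ℝ (Fin n)) (s : ℝ) {k : ℝ} (hk : k ≠ 0) :
    lineThrough (a + s • u) (k • u) = lineThrough a u := by
  ext x
  constructor
  · rintro ⟨t, rfl⟩
    exact ⟨s + t * k, by module⟩
  · rintro ⟨t, rfl⟩
    exact ⟨(t - s) / k, by match_scalars <;> field_simp; ring⟩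

lemma isClosed_lineThrough (a u : EuclideanSpace ℝ (Fin n)) : IsClosed (lineThrough a u) := by
  have : lineThrough a u = (fun y => y - a) ⁻¹' (Submodule.span ℝ {u} : Set _) := by
    ext y
    simp only [lineThrough, mem_ofPred_eq, mem_preimage, SetLike.mem_coe,
      Submodule.mem_span_singleton]
    exact exists_congr fun t => ⟨fun h => by rw [h]; abel, fun h => by rw [h]; abel⟩
  rw [this]
  exact (Submodule.closed_of_finiteDimensional _).preimage (by fun_prop)

/-- The chord condition for supporting lines given by an arbitrary base point and an arbitrary
direction vector. -/
lemma diam_chord {K L : Set (EuclideanSpace ℝ (Fin n))} {a u : EuclideanSpace ℝ (Fin n)} {l : ℝ}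
    (h : ∀ w : EuclideanSpace ℝ (Fin n), ‖w‖ = 1 →
      LineSupports L a w → Metric.diam (K ∩ lineThrough a w) = l) (hu : u ≠ 0)
    (hL : ∃ t : ℝ, a + t • u ∈ L) (hint : ∀ t : ℝ, a + t • u ∉ interior L) :
    Metric.diam (K ∩ lineThrough a u) = l := by
  have e : lineThrough a (dir u) = lineThrough a u := by
    have := lineThrough_shift a u 0 (inv_ne_zero (norm_ne_zero_iff.2 hu))
    rwa [zero_smul, add_zero] at this
  rw [← e]
  refine h _ (norm_dir hu) ⟨?_, ?_⟩
  · obtain ⟨t, ht⟩ := hL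
    exact ⟨_, by rw [e]; exact ⟨t, rfl⟩, ht⟩
  · rw [e, Set.eq_empty_iff_forall_notMem]
    rintro _ ⟨⟨t, rfl⟩, ht⟩
    exact hint t ht

end Lines

/-- `H₁ = {⟪v,·⟫ = c₁}` and `H₂ = {⟪v,·⟫ = c₂}` are two distinct parallel hyperplanes
with `K` and `L` in the open slab between them.  If for every point `x ∈ H₁ ∪ H₂` all
lines through `x` supporting `L` cut chords of the same length `lam x` on `K`, then
`K` and `L` are concentric balls. -/
theorem stmt_5 {n : ℕ} (hn : 3 ≤ n) (K L : Set (EuclideanSpace ℝ (Fin n)))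
    (hKcpt : IsCompact K) (hKconv : Convex ℝ K) (hKint : (interior K).Nonempty)
    (hLcpt : IsCompact L) (hLconv : Convex ℝ L) (hLint : (interior L).Nonempty)
    (hLK : L ⊆ interior K)
    (v : EuclideanSpace ℝ (Fin n)) (hv : v ≠ 0) (c₁ c₂ : ℝ) (hc : c₁ < c₂)
    (hslabK : ∀ y ∈ K, c₁ < ⟪v, y⟫ ∧ ⟪v, y⟫ < c₂)
    (hslabL : ∀ y ∈ L, c₁ < ⟪v, y⟫ ∧ ⟪v, y⟫ < c₂)
    (lam : EuclideanSpace ℝ (Fin n) → ℝ)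
    (hchord : ∀ x : EuclideanSpace ℝ (Fin n), (⟪v, x⟫ = c₁ ∨ ⟪v, x⟫ = c₂) →
      ∀ u : EuclideanSpace ℝ (Fin n), ‖u‖ = 1 →
        LineSupports L x u → Metric.diam (K ∩ lineThrough x u) = lam x) :
    ∃ (c : EuclideanSpace ℝ (Fin n)) (r s : ℝ),
      K = Metric.closedBall c r ∧ L = Metric.closedBall c s := by
  have hdim : 3 ≤ Module.finrank ℝ (EuclideanSpace ℝ (Fin n)) := by
    rwa [finrank_euclideanSpace_fin]
  obtain ⟨q, hq⟩ := hLint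
  obtain ⟨δ, hδ, hball⟩ := Metric.isOpen_iff.1 isOpen_interior q hq
  -- a supporting line joining `x` to `y` cuts the same chord, whichever point it is drawn from
  have hside : ∀ x y, ⟪v, x⟫ = c₁ → ⟪v, y⟫ = c₂ → (∃ τ : ℝ, x + τ • (y - x) ∈ L) →
      (∀ τ : ℝ, x + τ • (y - x) ∉ interior L) → lam x = lam y := by
    intro x y hx hy hL hint
    have hne : y - x ≠ 0 := by
      intro h
      rw [sub_eq_zero.1 h, hx] at hy
      exact hc.ne hy
    have h1 := diam_chord (hchord x (Or.inl hx)) hne hL hint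
    have hrev : ∀ τ : ℝ, y + τ • (y - x) = x + (1 + τ) • (y - x) := fun τ => by module
    have h2 := diam_chord (hchord y (Or.inr hy)) hne
      (by obtain ⟨τ, hτ⟩ := hL; exact ⟨τ - 1, by rwa [hrev, add_sub_cancel]⟩)
      (fun τ => by rw [hrev]; exact hint _)
    have e := lineThrough_shift x (y - x) 1 one_ne_zero
    rw [one_smul, add_sub_cancel] at e
    rw [← h1, ← h2, e]
  have hloc : ∀ x x', ⟪v, x⟫ = c₁ → ⟪v, x'⟫ = c₁ → ‖x' - x‖ < δ → lam x = lam x' := by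
    intro x x' hx hx' hd
    obtain ⟨y, hy, ⟨h1, h2⟩, h1', h2'⟩ := exists_link hdim hLcpt hLconv hc hslabL
      (hball.trans interior_subset) hx hx' hd
    exact (hside x y hx hy h1 h2).trans (hside x' y hx' hy h1' h2').symm
  set x₀ : EuclideanSpace ℝ (Fin n) := (c₁ / ⟪v, v⟫) • v with hx₀
  have hvx₀ : ⟪v, x₀⟫ = c₁ := by
    rw [hx₀, inner_smul_right, div_mul_cancel₀ _ (real_inner_self_pos.2 hv).ne']
  have hN : ConstChords K L v (lam x₀) := by
    intro a ha u hvu hint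
    have hu : u ≠ 0 := by rintro rfl; simp at hvu
    -- the point where the line meets the first hyperplane
    set k := (c₁ - ⟪v, a⟫) / ⟪v, u⟫ with hk
    have hvx : ⟪v, a + k • u⟫ = c₁ := by
      rw [inner_add_right, inner_smul_right, hk, div_mul_cancel₀ _ hvu]; ring
    have hdiam : Metric.diam (K ∩ lineThrough a u) = lam x₀ := by
      have h := diam_chord (u := u) (hchord _ (Or.inl hvx)) hu ⟨-k, by simpa using ha⟩
        (fun t => by rw [add_assoc, ← add_smul]; exact hint _)
      have e := lineThrough_shift a u k one_ne_zero
      rw [one_smul] at e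
      rw [← e, h]
      exact eq_of_locally_eq hδ hloc hvx hvx₀
    have hcpt : IsCompact (K ∩ lineThrough a u) := hKcpt.inter_right (isClosed_lineThrough a u)
    have hne : (K ∩ lineThrough a u).Nonempty := ⟨a, interior_subset (hLK ha), 0, by simp⟩
    have hdist : ∀ s t : ℝ, dist (a + t • u) (a + s • u) = |t - s| * ‖u‖ := by
      intro s t
      rw [dist_add_left, dist_eq_norm, ← sub_smul, norm_smul, Real.norm_eq_abs]
    have hle : ∀ s t : ℝ, a + s • u ∈ K → a + t • u ∈ K → (t - s) * ‖u‖ ≤ lam x₀ := by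
      intro s t hs ht
      have h := Metric.dist_le_diam_of_mem hcpt.isBounded (x := a + t • u) (y := a + s • u)
        ⟨ht, t, rfl⟩ ⟨hs, s, rfl⟩
      rw [hdist, hdiam] at h
      exact (mul_le_mul_of_nonneg_right (le_abs_self _) (norm_nonneg _)).trans h
    refine ⟨?_, hle⟩
    obtain ⟨y₁, hy₁, y₂, hy₂, hge⟩ := exists_diam_le_dist hcpt hne
    rw [hdiam] at hge
    obtain ⟨h₁, t, rfl⟩ := hy₁
    obtain ⟨h₂, s, rfl⟩ := hy₂
    rw [hdist] at hge
    rcases le_total s t with hst | hst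
    · rw [abs_of_nonneg (by linarith)] at hge
      exact ⟨s, t, h₂, h₁, le_antisymm (hle s t h₂ h₁) hge⟩
    · rw [abs_of_nonpos (by linarith), neg_sub] at hge
      exact ⟨t, s, h₁, h₂, le_antisymm (hle t s h₁ h₂) hge⟩
  have hB : BallSections K L v (lam x₀ / 2) := fun z hz p hp hmax x hx =>
    section_eq_ball hdim hN hv hKconv hKcpt.isClosed hLcpt hLK hq hz hp hmax hx
  exact concentric_of_ballSections hdim hB hLK hLcpt hLconv hq
end
end

section
/- Let K and L be convex bodies in ℝ³ with L contained in the interior of K. Suppose that for every unit vector u ∈ S² there is a number h(u) such that for every 2-dimensional plane H that supports L and is parallel to u, the section H ∩ K is a planar convex set of constant width h(u). Then K and L are concentric Euclidean balls. -/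
/-!
Any two directions are parallel to a common supporting plane of `L`, so `h u` is a constant `h` and
all sections of `K` by supporting planes of `L` have the same constant width `h`.

*The sections are disks.* A planar set of constant width `h` has a chord of length `h` in every
direction. For a unit vector `v`, the convex set `K ∩ (K - h v)` therefore meets every supporting
plane of `L` parallel to `v`, and by separation its projection along `v` contains that of `L`
(`ConstSections.exists_chord_through`). Hence, if a supporting plane touches `L` at `p`, then all
diametral chords of its section pass through `p`. This forces the support function of the section
about `p` to be constant, so the section is the disk of radius `r = h / 2` about `p`
(`ConstSections.mem_iff`); in particular `p` is determined by the plane.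

*`L` is a ball.* If two supporting planes with unit normals `n₁`, `n₂` and contact points `p₁`, `p₂`
meet in a line close enough to `p₁`, then the two disks cut the same chord out of that line. By
symmetry `p₁ - p₂` is parallel to `n₁ - n₂` (`DiskSections.contact_sub`). The contact point depends
continuously on the normal, so this applies to all nearby normals. As three points of the sphere
are never collinear, the proportionality factor is constant (`exists_affine_of_local`), and the
contact point with normal `n` is `c + s n` for fixed `c` and `s`. Thus `L` is the ball of radius `s`
about `c`.

*`K` is a ball.* Every point outside `L` lies on a tangent plane of `L`, which meets `K` in a disk
of radius `r` about the point of tangency. By Pythagoras `K` is the ball of radius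
`√(r² + s²)` about `c` (`DiskSections.balls`).
-/

open Metric Set
open scoped RealInnerProductSpace

noncomputable section

abbrev E3 := EuclideanSpace ℝ (Fin 3)

/-- The plane `{x | ⟪w, x⟫ = d}` with normal vector `w`. -/
def planeEq (w : E3) (d : ℝ) : Set E3 := {x | ⟪w, x⟫ = d}

/-- The plane `{x | ⟪w, x⟫ = d}` supports `L`: it meets `L` and `L` lies in one of
the closed half-spaces it bounds. -/
def PlaneSupports (L : Set E3) (w : E3) (d : ℝ) : Prop :=
  (planeEq w d ∩ L).Nonempty ∧ ∀ y ∈ L, ⟪w, y⟫ ≤ d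

/-- The width of a set `S` in direction `w'`. -/
def widthIn (S : Set E3) (w' : E3) : ℝ :=
  sSup ((fun x => ⟪x, w'⟫) '' S) - sInf ((fun x => ⟪x, w'⟫) '' S)

/-- A subset of the plane with normal `w` has constant width `h` if its width equals
`h` in every unit direction parallel to the plane. -/
def HasConstWidthIn (S : Set E3) (w : E3) (h : ℝ) : Prop :=
  ∀ w' : E3, ‖w'‖ = 1 → ⟪w', w⟫ = 0 → widthIn S w' = h

/-! ### Contact points and chords of length `h` -/

/-- `p` is a point of `L` at which a plane with outer normal `n` supports `L`. -/
def IsContact (L : Set E3) (n p : E3) : Prop := p ∈ L ∧ ∀ y ∈ L, ⟪n, y⟫ ≤ ⟪n, p⟫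

/-- All sections of `K` by planes supporting `L` have the same constant width `h`: the extent of
each section in every unit direction `v` of its plane is at most `h`, and `h` is attained. -/
structure ConstSections (K L : Set E3) (h : ℝ) : Prop where
  le : ∀ n p v : E3, n ≠ 0 → IsContact L n p → ‖v‖ = 1 → ⟪n, v⟫ = 0 →
    ∀ a ∈ K, ∀ b ∈ K, ⟪n, a⟫ = ⟪n, p⟫ → ⟪n, b⟫ = ⟪n, p⟫ → ⟪a - b, v⟫ ≤ h
  attained : ∀ n p v : E3, n ≠ 0 → IsContact L n p → ‖v‖ = 1 → ⟪n, v⟫ = 0 →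
    ∃ a ∈ K, ∃ b ∈ K, ⟪n, a⟫ = ⟪n, p⟫ ∧ ⟪n, b⟫ = ⟪n, p⟫ ∧ ⟪a - b, v⟫ = h

lemma exists_unit_orthogonal (a b : E3) : ∃ u : E3, ‖u‖ = 1 ∧ ⟪a, u⟫ = 0 ∧ ⟪b, u⟫ = 0 := by
  let f : E3 →ₗ[ℝ] ℝ × ℝ := LinearMap.prod (innerₗ E3 a) (innerₗ E3 b)
  have hf : LinearMap.ker f ≠ ⊥ := by
    apply LinearMap.ker_ne_bot_of_finrank_lt
    simp
  obtain ⟨x, hx, hx0⟩ := (Submodule.ne_bot_iff _).mp hf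
  have h1 : ⟪a, x⟫ = 0 ∧ ⟪b, x⟫ = 0 := by
    simpa [f] using hx
  refine ⟨‖x‖⁻¹ • x, norm_smul_inv_norm hx0, ?_, ?_⟩ <;> simp [inner_smul_right, h1]

lemma exists_isContact {L : Set E3} (hL : IsCompact L) (hne : L.Nonempty) (n : E3) :
    ∃ p, IsContact L n p := by
  obtain ⟨p, hp, hmax⟩ := hL.exists_isMaxOn hne
    (f := fun y => ⟪n, y⟫) (by fun_prop)
  exact ⟨p, hp, fun y hy => hmax hy⟩

lemma inner_self_one {v : E3} (hv : ‖v‖ = 1) : ⟪v, v⟫ = 1 := by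
  rw [real_inner_self_eq_norm_sq, hv]; norm_num

/-- Unwinds the width condition, whose suprema and infima are attained by compactness, and
shows that `h u` does not depend on `u`. -/
lemma constSections_of_hwidth {K L : Set E3} (hKcpt : IsCompact K)
    (hLcpt : IsCompact L) (hLne : L.Nonempty) (hLK : L ⊆ interior K) (h : E3 → ℝ)
    (hwidth : ∀ u : E3, ‖u‖ = 1 → ∀ w : E3, ∀ d : ℝ, w ≠ 0 → ⟪w, u⟫ = 0 →
      PlaneSupports L w d → HasConstWidthIn (planeEq w d ∩ K) w (h u)) :
    ∃ h₀, ConstSections K L h₀ := by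
  have hsup : ∀ n p, IsContact L n p → PlaneSupports L n ⟪n, p⟫ := fun n p hp =>
    ⟨⟨p, rfl, hp.1⟩, hp.2⟩
  -- Two directions `u`, `u'` are parallel to a common supporting plane, so `h u = h u'`.
  have hconst : ∀ u u' : E3, ‖u‖ = 1 → ‖u'‖ = 1 → h u = h u' := by
    intro u u' hu hu'
    obtain ⟨w, hw, h1, h2⟩ := exists_unit_orthogonal u u'
    have hw0 : w ≠ 0 := by rintro rfl; simp at hw
    obtain ⟨p, hp⟩ := exists_isContact hLcpt hLne w
    have e1 := hwidth u hu w _ hw0 (by rwa [real_inner_comm]) (hsup w p hp) u hu h1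
    have e2 := hwidth u' hu' w _ hw0 (by rwa [real_inner_comm]) (hsup w p hp) u hu h1
    rw [← e1, ← e2]
  obtain ⟨u₀, hu₀, -, -⟩ := exists_unit_orthogonal 0 0
  have key : ∀ n p v : E3, n ≠ 0 → IsContact L n p → ‖v‖ = 1 → ⟪n, v⟫ = 0 →
      widthIn (planeEq n ⟪n, p⟫ ∩ K) v = h u₀ := by
    intro n p v hn hp hv hnv
    rw [hconst u₀ v hu₀ hv]
    exact hwidth v hv n _ hn hnv (hsup n p hp) v hv (by rwa [real_inner_comm])
  have hScpt : ∀ n p, IsCompact (planeEq n ⟪n, p⟫ ∩ K) := fun n p =>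
    hKcpt.inter_left (isClosed_eq (by fun_prop) (by fun_prop))
  have hcont : ∀ v : E3, Continuous (fun x : E3 => ⟪x, v⟫) := fun v => by fun_prop
  refine ⟨h u₀, ⟨?_, ?_⟩⟩
  · intro n p v hn hp hv hnv a ha b hb hna hnb
    have hc := (hScpt n p).image (hcont v)
    rw [← key n p v hn hp hv hnv, widthIn, inner_sub_left]
    exact sub_le_sub (le_csSup hc.bddAbove ⟨a, ⟨hna, ha⟩, rfl⟩)
      (csInf_le hc.bddBelow ⟨b, ⟨hnb, hb⟩, rfl⟩)
  · intro n p v hn hp hv hnv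
    have hc := (hScpt n p).image (hcont v)
    have hne : ((fun x : E3 => ⟪x, v⟫) '' (planeEq n ⟪n, p⟫ ∩ K)).Nonempty :=
      ⟨_, p, ⟨rfl, interior_subset (hLK hp.1)⟩, rfl⟩
    obtain ⟨a, ⟨ha, haK⟩, ha'⟩ := hc.sSup_mem hne
    obtain ⟨b, ⟨hb, hbK⟩, hb'⟩ := hc.sInf_mem hne
    refine ⟨a, haK, b, hbK, ha, hb, ?_⟩
    rw [← key n p v hn hp hv hnv, widthIn, inner_sub_left]
    exact congrArg₂ _ ha' hb'

section Sections

variable {K L : Set E3} {h : ℝ}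

lemma ConstSections.norm_sub_le (hS : ConstSections K L h) {n p a b : E3} (hn : n ≠ 0)
    (hp : IsContact L n p) (ha : a ∈ K) (hb : b ∈ K) (hna : ⟪n, a⟫ = ⟪n, p⟫)
    (hnb : ⟪n, b⟫ = ⟪n, p⟫) (hab : a - b ≠ 0) : ‖a - b‖ ≤ h := by
  have := hS.le n p (‖a - b‖⁻¹ • (a - b)) hn hp (norm_smul_inv_norm hab)
    (by simp [inner_smul_right, inner_sub_right, hna, hnb]) a ha b hb hna hnb
  rw [inner_smul_right, real_inner_self_eq_norm_sq] at this
  have h0 : ‖a - b‖ ≠ 0 := norm_ne_zero_iff.mpr hab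
  calc ‖a - b‖ = ‖a - b‖⁻¹ * ‖a - b‖ ^ 2 := by field_simp
    _ ≤ h := this

/-- A set of constant width `h` has a chord of length `h` in every direction: points on the
two support lines orthogonal to `v` are at most `h` apart, so their difference is `h • v`. -/
lemma ConstSections.exists_chord (hS : ConstSections K L h) {n p v : E3} (hn : n ≠ 0)
    (hp : IsContact L n p) (hv : ‖v‖ = 1) (hnv : ⟪n, v⟫ = 0) :
    ∃ x ∈ K, x + h • v ∈ K ∧ ⟪n, x⟫ = ⟪n, p⟫ := by
  obtain ⟨a, ha, b, hb, hna, hnb, hab⟩ := hS.attained n p v hn hp hv hnv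
  refine ⟨b, hb, ?_, hnb⟩
  suffices a - b = h • v by rw [← this]; simpa using ha
  by_cases h0 : a - b = 0
  · have : h = 0 := by rw [← hab, h0]; simp
    rw [h0, this]; simp
  have hle := hS.norm_sub_le hn hp ha hb hna hnb h0
  have hz : ‖a - b - h • v‖ ^ 2 ≤ 0 := by
    rw [norm_sub_sq_real, inner_smul_right, norm_smul, hv, hab]
    have := norm_nonneg (a - b)
    simp only [Real.norm_eq_abs, mul_one, sq_abs]
    nlinarith
  have : ‖a - b - h • v‖ = 0 := by nlinarith [norm_nonneg (a - b - h • v)]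
  exact sub_eq_zero.mp (norm_eq_zero.mp this)

/-- The support points of `L` in opposite directions lie in different planes. -/
lemma inner_lt_of_isContact (hLint : (interior L).Nonempty) {n p q : E3} (hn : n ≠ 0)
    (hp : IsContact L n p) (hq : IsContact L (-n) q) : ⟪n, q⟫ < ⟪n, p⟫ := by
  obtain ⟨z, hz⟩ := hLint
  have hn2 : 0 < ⟪n, n⟫ := real_inner_self_pos.mpr hn
  have hc : Filter.Tendsto (fun t : ℝ => z + t • n) (nhdsWithin 0 (Ioi 0)) (nhds z) := by
    have : ContinuousAt (fun t : ℝ => z + t • n) 0 := by fun_prop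
    have := this.tendsto
    simp only [zero_smul, add_zero] at this
    exact this.mono_left nhdsWithin_le_nhds
  have hev := (hc.eventually (mem_interior_iff_mem_nhds.mp hz)).and self_mem_nhdsWithin
  obtain ⟨t, ht, ht0⟩ := hev.exists
  have ht0 : 0 < t := ht0
  have h1 := hp.2 _ ht
  have h2 := hq.2 z (interior_subset hz)
  simp only [inner_neg_left, inner_add_right, inner_smul_right] at h1 h2
  nlinarith [mul_pos ht0 hn2]

/-- Every point of `L` lies on a chord of `K` of length `h` in direction `v`. Indeed the convex
set `M = K ∩ (K - h v)` meets every supporting plane of `L` parallel to `v`, so the projection of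
`M` along `v` contains that of `L`. -/
lemma ConstSections.exists_chord_through (hS : ConstSections K L h) (hKcpt : IsCompact K)
    (hKconv : Convex ℝ K) (hLcpt : IsCompact L) (hLint : (interior L).Nonempty)
    {p v : E3} (hpL : p ∈ L) (hv : ‖v‖ = 1) :
    ∃ t : ℝ, p + t • v ∈ K ∧ p + (t + h) • v ∈ K := by
  have hLne : L.Nonempty := hLint.mono interior_subset
  have hvv := inner_self_one hv
  let M : Set E3 := K ∩ (fun x => x + h • v) ⁻¹' K
  have hMcpt : IsCompact M :=
    hKcpt.inter_right (hKcpt.isClosed.preimage (by fun_prop))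
  have hMconv : Convex ℝ M := hKconv.inter (hKconv.translate_preimage_left _)
  let P : E3 →ₗ[ℝ] E3 := LinearMap.id - (innerₗ E3 v).smulRight v
  have hPx : ∀ x, P x = x - ⟪v, x⟫ • v := fun x => by simp [P]
  have hPcont : Continuous P := LinearMap.continuous_of_finiteDimensional P
  have hreach : ∀ m : E3, m ≠ 0 → ⟪m, v⟫ = 0 → ∀ q, IsContact L m q →
      ∃ x ∈ M, ⟪m, x⟫ = ⟪m, q⟫ := by
    intro m hm hmv q hq
    obtain ⟨x, hx, hx', hxe⟩ := hS.exists_chord hm hq hv hmv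
    exact ⟨x, ⟨hx, hx'⟩, hxe⟩
  have hmem : P p ∈ P '' M := by
    by_contra hcon
    obtain ⟨f, c, hfp, hfM⟩ := geometric_hahn_banach_point_closed (hMconv.linear_image P)
      (hMcpt.image hPcont).isClosed hcon
    let m : E3 := -((InnerProductSpace.toDual ℝ E3).symm f -
      ⟪v, (InnerProductSpace.toDual ℝ E3).symm f⟫ • v)
    have hfm : ∀ x, f (P x) = -⟪m, x⟫ := by
      intro x
      rw [← InnerProductSpace.toDual_symm_apply, hPx]
      simp only [m, inner_sub_right, inner_smul_right, inner_neg_left, inner_sub_left,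
        real_inner_smul_left]
      rw [real_inner_comm v ((InnerProductSpace.toDual ℝ E3).symm f)]
      ring
    have hmv : ⟪m, v⟫ = 0 := by
      simp only [m, inner_neg_left, inner_sub_left, real_inner_smul_left, hvv]
      rw [real_inner_comm v]
      ring
    have hm : m ≠ 0 := by
      intro hm0
      obtain ⟨w, hw, hwv, -⟩ := exists_unit_orthogonal v 0
      obtain ⟨q, hq⟩ := exists_isContact hLcpt hLne w
      obtain ⟨x, hx, -⟩ := hreach w (by rintro rfl; simp at hw)
        (by rwa [real_inner_comm]) q hq
      have h1 := hfM _ ⟨x, hx, rfl⟩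
      rw [hfm, hm0] at hfp h1
      simp only [inner_zero_left, neg_zero] at hfp h1
      linarith
    obtain ⟨q, hq⟩ := exists_isContact hLcpt hLne m
    obtain ⟨x, hx, hxq⟩ := hreach m hm hmv q hq
    have h1 := hfM _ ⟨x, hx, rfl⟩
    rw [hfm] at hfp h1
    have h2 := hq.2 p hpL
    linarith
  obtain ⟨x, ⟨hx, hx'⟩, hxp⟩ := hmem
  rw [hPx, hPx] at hxp
  have hxe : x = p + (⟪v, x⟫ - ⟪v, p⟫) • v := by
    rw [sub_smul, ← sub_eq_zero]
    rw [← sub_eq_zero] at hxp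
    rw [← hxp]; abel
  refine ⟨⟪v, x⟫ - ⟪v, p⟫, hxe ▸ hx, ?_⟩
  rw [add_smul, ← add_assoc, ← hxe]
  exact hx'

end Sections

/-! ### Supporting sections are disks about the contact points -/

lemma eq_of_abs_sub_le_sq {φ : ℝ → ℝ} {C : ℝ} (hφ : ∀ s t, |φ s - φ t| ≤ C * (s - t) ^ 2)
    (s t : ℝ) : φ s = φ t := by
  have hder : ∀ x, HasDerivAt φ 0 x := by
    intro x
    have hO : (fun y => φ y - φ x) =O[nhds x] fun y => ‖y - x‖ ^ 2 := by
      refine Asymptotics.IsBigO.of_bound C (Filter.Eventually.of_forall fun y => ?_)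
      simpa [Real.norm_eq_abs] using hφ y x
    have h1 := (hO.hasFDerivAt (𝕜 := ℝ) (by norm_num)).hasDerivAt
    simpa using h1.add_const (φ x)
  exact is_const_of_deriv_eq_zero (fun x => (hder x).differentiableAt)
    (fun x => (hder x).deriv) s t

section Disk

variable {K L : Set E3} {h : ℝ}

/-- The section of `K` by a supporting plane of `L` is the disk of radius `h / 2` about the
contact point `p`. All diametral chords of the section pass through `p`, so its support function
`G` about `p` satisfies `G v * ⟪v, w⟫ ≤ G w`; hence `G` has zero derivative and is constant. -/
lemma ConstSections.mem_iff (hS : ConstSections K L h) (hKcpt : IsCompact K)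
    (hKconv : Convex ℝ K) (hLcpt : IsCompact L) (hLint : (interior L).Nonempty)
    (hLK : L ⊆ interior K) {n p : E3} (hn : n ≠ 0) (hp : IsContact L n p) {x : E3}
    (hx : ⟪n, x⟫ = ⟪n, p⟫) : x ∈ K ↔ ‖x - p‖ ≤ h / 2 := by
  have hpK : p ∈ K := interior_subset (hLK hp.1)
  have hex : ∀ v : E3, ∃ g : ℝ, ‖v‖ = 1 → p + g • v ∈ K ∧ p + (g - h) • v ∈ K := by
    intro v
    by_cases hv : ‖v‖ = 1
    · obtain ⟨t, h1, h2⟩ := hS.exists_chord_through hKcpt hKconv hLcpt hLint hp.1 hv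
      exact ⟨t + h, fun _ => ⟨h2, by simpa using h1⟩⟩
    · exact ⟨0, fun h => absurd h hv⟩
  choose G hG using hex
  have hplane : ∀ (g : ℝ) (v : E3), ⟪n, v⟫ = 0 → ⟪n, p + g • v⟫ = ⟪n, p⟫ := by
    intro g v hv
    simp [inner_add_right, inner_smul_right, hv]
  have hsupp : ∀ v, ‖v‖ = 1 → ⟪n, v⟫ = 0 → ∀ y ∈ K, ⟪n, y⟫ = ⟪n, p⟫ → ⟪y - p, v⟫ ≤ G v := by
    intro v hv hnv y hy hny
    have := hS.le n p v hn hp hv hnv y hy _ (hG v hv).2 hny (hplane _ _ hnv)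
    rw [← sub_sub, inner_sub_left, real_inner_smul_left, inner_self_one hv] at this
    linarith
  have hnonneg : ∀ v, ‖v‖ = 1 → ⟪n, v⟫ = 0 → 0 ≤ G v := by
    intro v hv hnv
    simpa using hsupp v hv hnv p hpK rfl
  have hcmp : ∀ v w, ‖v‖ = 1 → ⟪n, v⟫ = 0 → ‖w‖ = 1 → ⟪n, w⟫ = 0 → G v * ⟪v, w⟫ ≤ G w := by
    intro v w hv hnv hw hnw
    have := hsupp w hw hnw _ (hG v hv).1 (hplane _ _ hnv)
    simpa [real_inner_smul_left] using this
  have hadd : ∀ v, ‖v‖ = 1 → ⟪n, v⟫ = 0 → G v + G (-v) = h := by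
    intro v hv hnv
    have hv' : ‖-v‖ = 1 := by rwa [norm_neg]
    have hnv' : ⟪n, -v⟫ = 0 := by rw [inner_neg_right, hnv, neg_zero]
    have h1 := hsupp (-v) hv' hnv' _ (hG v hv).2 (hplane _ _ hnv)
    have h2 := hS.le n p v hn hp hv hnv _ (hG v hv).1 _ (hG (-v) hv').1
      (hplane _ _ hnv) (hplane _ _ hnv')
    simp only [add_sub_cancel_left, add_sub_add_left_eq_sub, inner_neg_right, inner_sub_left,
      real_inner_smul_left, inner_neg_left, inner_self_one hv] at h1 h2
    linarith
  have hle : ∀ v, ‖v‖ = 1 → ⟪n, v⟫ = 0 → G v ≤ h := by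
    intro v hv hnv
    have := hadd v hv hnv
    have := hnonneg (-v) (by rwa [norm_neg]) (by rw [inner_neg_right, hnv, neg_zero])
    linarith
  have hhalf : ∀ v, ‖v‖ = 1 → ⟪n, v⟫ = 0 → G v = h / 2 := by
    intro v hv hnv
    have h0 : 0 ≤ h := (hnonneg v hv hnv).trans (hle v hv hnv)
    obtain ⟨e, he, hne, hve⟩ := exists_unit_orthogonal n v
    let γ : ℝ → E3 := fun t => Real.cos t • v + Real.sin t • e
    have hin : ∀ s t, ⟪γ s, γ t⟫ = Real.cos (s - t) := by
      intro s t
      have hev : ⟪e, v⟫ = 0 := by rwa [real_inner_comm]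
      simp only [γ, inner_add_left, inner_add_right, real_inner_smul_left, inner_smul_right,
        inner_self_one hv, inner_self_one he, hve, hev, Real.cos_sub]
      ring
    have hγ1 : ∀ t, ‖γ t‖ = 1 := by
      intro t
      have := hin t t
      rw [real_inner_self_eq_norm_sq, sub_self, Real.cos_zero] at this
      nlinarith [norm_nonneg (γ t)]
    have hγn : ∀ t, ⟪n, γ t⟫ = 0 := by
      intro t
      simp [γ, inner_add_right, inner_smul_right, hnv, hne]
    have hone : ∀ s t, G (γ s) - G (γ t) ≤ h / 2 * (s - t) ^ 2 := by
      intro s t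
      have h1 := hcmp (γ s) (γ t) (hγ1 s) (hγn s) (hγ1 t) (hγn t)
      rw [hin] at h1
      have h2 := Real.one_sub_sq_div_two_le_cos (x := s - t)
      have h3 := hle (γ s) (hγ1 s) (hγn s)
      have h4 := hnonneg (γ s) (hγ1 s) (hγn s)
      nlinarith [mul_nonneg h4 (sub_nonneg.mpr h2),
        mul_nonneg (sub_nonneg.mpr h3) (sq_nonneg (s - t))]
    have hconst := eq_of_abs_sub_le_sq (φ := fun t => G (γ t)) (C := h / 2)
      (fun s t => abs_le.mpr ⟨by nlinarith [hone t s], hone s t⟩) 0 Real.pi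
    have e0 : γ 0 = v := by simp [γ]
    have e1 : γ Real.pi = -v := by simp [γ]
    simp only [e0, e1] at hconst
    linarith [hadd v hv hnv]
  by_cases hxp : x - p = 0
  · have h0 : 0 ≤ h := by
      obtain ⟨v, hv, hnv, -⟩ := exists_unit_orthogonal n 0
      exact (hnonneg v hv hnv).trans (hle v hv hnv)
    have hxp' : x = p := sub_eq_zero.mp hxp
    subst hxp'
    simp only [hpK, sub_self, norm_zero, true_iff]
    linarith
  have hnorm : 0 < ‖x - p‖ := norm_pos_iff.mpr hxp
  have hv : ‖‖x - p‖⁻¹ • (x - p)‖ = 1 := norm_smul_inv_norm hxp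
  have hnv : ⟪n, ‖x - p‖⁻¹ • (x - p)⟫ = 0 := by
    simp [inner_smul_right, inner_sub_right, hx]
  have hGv := hhalf _ hv hnv
  constructor
  · intro hxK
    have h1 := hsupp _ hv hnv x hxK hx
    rw [hGv, inner_smul_right, real_inner_self_eq_norm_sq] at h1
    calc ‖x - p‖ = ‖x - p‖⁻¹ * ‖x - p‖ ^ 2 := by field_simp
      _ ≤ h / 2 := h1
  · intro hle'
    have h1 := (hG _ hv).1
    rw [hGv] at h1
    have hh : 0 < h / 2 := hnorm.trans_le hle'
    have h2 := hKconv.add_smul_sub_mem hpK h1 (t := ‖x - p‖ / (h / 2))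
      ⟨by positivity, (div_le_one hh).mpr hle'⟩
    rw [add_sub_cancel_left, smul_smul, smul_smul] at h2
    have : ‖x - p‖ / (h / 2) * (h / 2) * ‖x - p‖⁻¹ = 1 := by
      rw [div_mul_cancel₀ _ hh.ne', mul_inv_cancel₀ hnorm.ne']
    rw [this, one_smul, add_sub_cancel] at h2
    exact h2

/-- The conclusion of `ConstSections.mem_iff`, together with the positivity of the radius: the
sections of `K` by supporting planes of `L` are disks of radius `r` about the contact points. -/
structure DiskSections (K L : Set E3) (r : ℝ) : Prop where
  pos : 0 < r
  mem_iff : ∀ n p x : E3, n ≠ 0 → IsContact L n p → ⟪n, x⟫ = ⟪n, p⟫ →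
    (x ∈ K ↔ ‖x - p‖ ≤ r)

lemma ConstSections.diskSections (hS : ConstSections K L h) (hKcpt : IsCompact K)
    (hKconv : Convex ℝ K) (hLcpt : IsCompact L) (hLint : (interior L).Nonempty)
    (hLK : L ⊆ interior K) : DiskSections K L (h / 2) := by
  have hmem : ∀ n p x : E3, n ≠ 0 → IsContact L n p → ⟪n, x⟫ = ⟪n, p⟫ →
      (x ∈ K ↔ ‖x - p‖ ≤ h / 2) := fun n p x hn hp hx =>
    hS.mem_iff hKcpt hKconv hLcpt hLint hLK hn hp hx
  refine ⟨?_, hmem⟩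
  obtain ⟨n, hn, -, -⟩ := exists_unit_orthogonal 0 0
  obtain ⟨p, hp⟩ := exists_isContact hLcpt (hLint.mono interior_subset) n
  obtain ⟨v, hv, hnv, -⟩ := exists_unit_orthogonal n 0
  obtain ⟨ε, hε, hball⟩ := Metric.mem_nhds_iff.mp (mem_interior_iff_mem_nhds.mp (hLK hp.1))
  have hx : p + (ε / 2) • v ∈ K := by
    apply hball
    rw [Metric.mem_ball, dist_eq_norm, add_sub_cancel_left, norm_smul, hv, Real.norm_eq_abs,
      abs_of_pos (by positivity)]
    linarith
  have h1 := (hmem n p _ (by rintro rfl; simp at hn) hp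
    (by simp [inner_add_right, inner_smul_right, hnv])).mp hx
  rw [add_sub_cancel_left, norm_smul, hv, Real.norm_eq_abs, abs_of_pos (by positivity)] at h1
  linarith

/-- Each supporting plane touches `L` in one point, the centre of the disk it cuts out of `K`. -/
lemma DiskSections.contact_unique {r : ℝ} (hD : DiskSections K L r) {n p q : E3} (hn : n ≠ 0)
    (hp : IsContact L n p) (hq : IsContact L n q) : p = q := by
  by_contra hne
  have hpq : p - q ≠ 0 := sub_ne_zero.mpr hne
  have heq : ⟪n, p⟫ = ⟪n, q⟫ := le_antisymm (hq.2 p hp.1) (hp.2 q hq.1)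
  -- The point of the circle about `p` opposite to `q` is too far from `q`.
  have hn0 : ⟪n, p + (r * ‖p - q‖⁻¹) • (p - q)⟫ = ⟪n, p⟫ := by
    simp [inner_add_right, inner_smul_right, inner_sub_right, heq]
  have hpos : 0 < ‖p - q‖ := norm_pos_iff.mpr hpq
  have hr := hD.pos
  have h1 : p + (r * ‖p - q‖⁻¹) • (p - q) ∈ K := by
    rw [hD.mem_iff n p _ hn hp hn0, add_sub_cancel_left, norm_smul, Real.norm_eq_abs,
      abs_of_pos (by positivity)]
    field_simp
    exact le_rfl
  rw [hD.mem_iff n q _ hn hq (hn0.trans heq)] at h1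
  have h2 : p + (r * ‖p - q‖⁻¹) • (p - q) - q = (1 + r * ‖p - q‖⁻¹) • (p - q) := by
    rw [add_smul, one_smul]; abel
  rw [h2, norm_smul, Real.norm_eq_abs, abs_of_pos (by positivity)] at h1
  have h3 : (1 + r * ‖p - q‖⁻¹) * ‖p - q‖ = ‖p - q‖ + r := by field_simp
  linarith

/-! ### Comparing two supporting sections -/

/-- Let `m` lie on the common line of two supporting planes of `L`, at distance at most `r` from
`p₁` and with `m - p₁` orthogonal to that line. The two disks cut the same chord out of the line,
so `m - p₂` is orthogonal to the line as well and `m` is equidistant from `p₁` and `p₂`. -/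
lemma DiskSections.equidistant {r : ℝ} (hD : DiskSections K L r) {n₁ n₂ p₁ p₂ m u : E3}
    (hn₁ : n₁ ≠ 0) (hn₂ : n₂ ≠ 0) (hp₁ : IsContact L n₁ p₁) (hp₂ : IsContact L n₂ p₂)
    (hu : ‖u‖ = 1) (hu₁ : ⟪n₁, u⟫ = 0) (hu₂ : ⟪n₂, u⟫ = 0) (hm₁ : ⟪n₁, m⟫ = ⟪n₁, p₁⟫)
    (hm₂ : ⟪n₂, m⟫ = ⟪n₂, p₂⟫) (hmu : ⟪m - p₁, u⟫ = 0) (hmr : ‖m - p₁‖ ≤ r) :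
    ⟪m - p₂, u⟫ = 0 ∧ ‖m - p₂‖ = ‖m - p₁‖ := by
  have hr := hD.pos
  have hnorm : ∀ (p : E3) (s : ℝ),
      ‖m + s • u - p‖ ^ 2 = ‖m - p‖ ^ 2 + 2 * s * ⟪m - p, u⟫ + s ^ 2 := by
    intro p s
    rw [show m + s • u - p = (m - p) + s • u by abel, norm_add_sq_real, inner_smul_right,
      norm_smul, hu, Real.norm_eq_abs, mul_one, sq_abs]
    ring
  have hiff : ∀ s : ℝ, ‖m - p₁‖ ^ 2 + s ^ 2 ≤ r ^ 2 ↔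
      ‖m - p₂‖ ^ 2 + 2 * s * ⟪m - p₂, u⟫ + s ^ 2 ≤ r ^ 2 := by
    intro s
    have e1 := hD.mem_iff n₁ p₁ (m + s • u) hn₁ hp₁
      (by simp [inner_add_right, inner_smul_right, hu₁, hm₁])
    have e2 := hD.mem_iff n₂ p₂ (m + s • u) hn₂ hp₂
      (by simp [inner_add_right, inner_smul_right, hu₂, hm₂])
    have e3 := e1.symm.trans e2
    rw [← sq_le_sq₀ (norm_nonneg _) hr.le, ← sq_le_sq₀ (norm_nonneg _) hr.le, hnorm, hnorm,
      hmu] at e3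
    simpa using e3
  set b := ⟪m - p₂, u⟫
  set A := ‖m - p₁‖ ^ 2 with hA
  set B := ‖m - p₂‖ ^ 2 with hB
  have hAr : A ≤ r ^ 2 := by
    rw [hA]; exact (sq_le_sq₀ (norm_nonneg _) hr.le).mpr hmr
  -- The endpoints of the chord, first as seen from `p₁`, then as seen from `p₂`.
  have hσ := Real.sq_sqrt (sub_nonneg.mpr hAr)
  set σ := Real.sqrt (r ^ 2 - A)
  have h1 := (hiff σ).mp (by linarith)
  have h2 := (hiff (-σ)).mp (by nlinarith)
  have hBr : 0 ≤ r ^ 2 - B + b ^ 2 := by nlinarith [sq_nonneg b]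
  have hτ := Real.sq_sqrt hBr
  set τ := Real.sqrt (r ^ 2 - B + b ^ 2)
  have h3 := (hiff (-b + τ)).mpr (by nlinarith)
  have h4 := (hiff (-b - τ)).mpr (by nlinarith)
  have hb : b = 0 := by nlinarith [sq_nonneg b]
  refine ⟨hb, ?_⟩
  rw [← sq_eq_sq₀ (norm_nonneg _) (norm_nonneg _)]
  rw [hb] at h1 h2 h3 h4 hτ
  nlinarith

/-- If two contact points are close and their normals form an acute angle, the common line of the
two supporting planes meets the disk about `p₁`. Then `p₁` and `p₂` are mirror images in a bisector
plane, so their difference is parallel to the difference of the unit normals. -/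
lemma DiskSections.contact_sub {r : ℝ} (hD : DiskSections K L r) {n₁ n₂ p₁ p₂ : E3}
    (hn₁ : ‖n₁‖ = 1) (hn₂ : ‖n₂‖ = 1) (hp₁ : IsContact L n₁ p₁) (hp₂ : IsContact L n₂ p₂)
    (hne : n₁ ≠ n₂) (hc0 : 0 ≤ ⟪n₁, n₂⟫) (hclose : 2 * ‖p₂ - p₁‖ ^ 2 ≤ r ^ 2) :
    ∃ t : ℝ, p₁ - p₂ = t • (n₁ - n₂) := by
  have hr := hD.pos
  have h11 := inner_self_one hn₁
  have h22 := inner_self_one hn₂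
  have h21 : ⟪n₂, n₁⟫ = ⟪n₁, n₂⟫ := real_inner_comm _ _
  have hz₁ : n₁ ≠ 0 := by rintro rfl; simp at hn₁
  have hz₂ : n₂ ≠ 0 := by rintro rfl; simp at hn₂
  have hdiff : ‖n₂ - n₁‖ ^ 2 = 2 - 2 * ⟪n₁, n₂⟫ := by
    rw [norm_sub_sq_real, hn₁, hn₂, h21]; ring
  set c := ⟪n₁, n₂⟫ with hc
  have hc1 : c < 1 := by
    have : 0 < ‖n₂ - n₁‖ := norm_pos_iff.mpr (sub_ne_zero.mpr hne.symm)
    nlinarith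
  have hk : 0 < 1 - c ^ 2 := by nlinarith
  have hd1 : ⟪n₁, p₂⟫ ≤ ⟪n₁, p₁⟫ := hp₁.2 p₂ hp₂.1
  have hd2 : ⟪n₂, p₁⟫ ≤ ⟪n₂, p₂⟫ := hp₂.2 p₁ hp₁.1
  set a := (⟪n₂, p₁⟫ - ⟪n₂, p₂⟫) / (1 - c ^ 2) with ha
  have hak : a * (1 - c ^ 2) = ⟪n₂, p₁⟫ - ⟪n₂, p₂⟫ := by rw [ha]; field_simp
  have ha0 : a ≤ 0 := div_nonpos_of_nonpos_of_nonneg (by linarith) hk.le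
  -- `m` is the foot of `p₁` on the common line of the two planes.
  set m := p₁ - a • (n₂ - c • n₁) with hm
  have hm₁ : ⟪n₁, m⟫ = ⟪n₁, p₁⟫ := by
    simp only [hm, inner_sub_right, inner_smul_right, h11, ← hc]; ring
  have hm₂ : ⟪n₂, m⟫ = ⟪n₂, p₂⟫ := by
    simp only [hm, inner_sub_right, inner_smul_right, h22, h21]; linarith
  have hmp : m - p₁ = (-a) • (n₂ - c • n₁) := by rw [hm, neg_smul]; abel
  have hnsq : ∀ (x y : E3), ‖x‖ = 1 → ‖y‖ = 1 → ⟪x, y⟫ = c → ‖x - c • y‖ ^ 2 = 1 - c ^ 2 := by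
    intro x y hx hy hxy
    rw [norm_sub_sq_real, inner_smul_right, norm_smul, hx, hy, hxy, Real.norm_eq_abs, mul_one,
      sq_abs]
    ring
  have hmsq : ‖m - p₁‖ ^ 2 = a ^ 2 * (1 - c ^ 2) := by
    rw [hmp, norm_smul, mul_pow, hnsq n₂ n₁ hn₂ hn₁ h21, Real.norm_eq_abs, sq_abs]; ring
  have hmr : ‖m - p₁‖ ≤ r := by
    rw [← sq_le_sq₀ (norm_nonneg _) hr.le]
    have hcs := real_inner_le_norm (n₂ - n₁) (p₂ - p₁)
    have hX : ⟪n₂, p₂⟫ - ⟪n₂, p₁⟫ ≤ ‖n₂ - n₁‖ * ‖p₂ - p₁‖ := by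
      refine le_trans ?_ hcs
      simp only [inner_sub_left, inner_sub_right]; linarith
    have hX2 : (⟪n₂, p₂⟫ - ⟪n₂, p₁⟫) ^ 2 ≤ (2 - 2 * c) * ‖p₂ - p₁‖ ^ 2 := by
      rw [← hdiff, ← mul_pow]
      exact pow_le_pow_left₀ (by linarith) hX 2
    have h1 : a ^ 2 * (1 - c ^ 2) * (1 - c ^ 2) ≤ r ^ 2 * (1 - c ^ 2) := by
      calc a ^ 2 * (1 - c ^ 2) * (1 - c ^ 2) = (⟪n₂, p₂⟫ - ⟪n₂, p₁⟫) ^ 2 := by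
            have : (a * (1 - c ^ 2)) ^ 2 = (⟪n₂, p₁⟫ - ⟪n₂, p₂⟫) ^ 2 := by rw [hak]
            nlinarith
        _ ≤ (2 - 2 * c) * ‖p₂ - p₁‖ ^ 2 := hX2
        _ = (1 - c) * (2 * ‖p₂ - p₁‖ ^ 2) := by ring
        _ ≤ (1 - c) * r ^ 2 := by gcongr
        _ ≤ r ^ 2 * (1 - c ^ 2) := by
            nlinarith [mul_nonneg (mul_nonneg hc0 (sub_nonneg.mpr hc1.le)) (sq_nonneg r)]
    rw [hmsq]
    exact le_of_mul_le_mul_right h1 hk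
  have heq : ∀ u : E3, ‖u‖ = 1 → ⟪n₁, u⟫ = 0 → ⟪n₂, u⟫ = 0 →
      ⟪m - p₂, u⟫ = 0 ∧ ‖m - p₂‖ = ‖m - p₁‖ := by
    intro u hu hu₁ hu₂
    refine hD.equidistant hz₁ hz₂ hp₁ hp₂ hu hu₁ hu₂ hm₁ hm₂ ?_ hmr
    rw [hmp]
    simp [real_inner_smul_left, inner_sub_left, hu₁, hu₂]
  set b := (⟪n₁, p₂⟫ - ⟪n₁, p₁⟫) / (1 - c ^ 2) with hb
  have hbk : b * (1 - c ^ 2) = ⟪n₁, p₂⟫ - ⟪n₁, p₁⟫ := by rw [hb]; field_simp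
  have hb0 : b ≤ 0 := div_nonpos_of_nonpos_of_nonneg (by linarith) hk.le
  -- `y` is the component of `m - p₂` along the common line.
  set y := m - p₂ + b • (n₁ - c • n₂) with hy
  have hy₁ : ⟪n₁, y⟫ = 0 := by
    simp only [hy, inner_add_right, inner_sub_right, inner_smul_right, h11, ← hc, hm₁]; linarith
  have hy₂ : ⟪n₂, y⟫ = 0 := by
    simp only [hy, inner_add_right, inner_sub_right, inner_smul_right, h22, h21, hm₂]; ring
  have hy0 : y = 0 := by
    by_contra hyne
    have h1 := (heq (‖y‖⁻¹ • y) (norm_smul_inv_norm hyne)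
      (by rw [inner_smul_right, hy₁, mul_zero]) (by rw [inner_smul_right, hy₂, mul_zero])).1
    have h2 : m - p₂ = y - b • (n₁ - c • n₂) := by rw [hy]; abel
    rw [h2, inner_smul_right, inner_sub_left, real_inner_smul_left, inner_sub_left,
      real_inner_smul_left, hy₁, hy₂, real_inner_self_eq_norm_sq] at h1
    have h3 : ‖y‖ ≠ 0 := norm_ne_zero_iff.mpr hyne
    field_simp at h1
    simp at h1
    exact hyne h1
  have hmp₂ : m - p₂ = (-b) • (n₁ - c • n₂) := by
    rw [neg_smul, ← sub_eq_zero, sub_neg_eq_add, ← hy, hy0]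
  obtain ⟨u, hu, hu₁, hu₂⟩ := exists_unit_orthogonal n₁ n₂
  have hnn := (heq u hu hu₁ hu₂).2
  have hab : a = b := by
    have h1 : ‖m - p₂‖ ^ 2 = b ^ 2 * (1 - c ^ 2) := by
      rw [hmp₂, norm_smul, mul_pow, hnsq n₁ n₂ hn₁ hn₂ hc.symm, Real.norm_eq_abs, sq_abs]; ring
    rw [hnn, hmsq] at h1
    have h2 : a ^ 2 = b ^ 2 := mul_right_cancel₀ hk.ne' h1
    rcases sq_eq_sq_iff_eq_or_eq_neg.mp h2 with h3 | h3
    · exact h3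
    · linarith
  refine ⟨-a * (1 + c), ?_⟩
  have : p₁ - p₂ = (m - p₂) - (m - p₁) := by abel
  rw [this, hmp₂, hmp, ← hab]
  module

end Disk

/-! ### Dependence of the contact point on the normal -/

/-- If every supporting plane touches `L` in a single point, the contact point depends continuously
on the unit normal: `L` is compact and the contact relation is closed. -/
lemma continuous_of_isContact {L : Set E3} (hLcpt : IsCompact L)
    (huniq : ∀ n p q : E3, n ≠ 0 → IsContact L n p → IsContact L n q → p = q)
    {P : sphere (0 : E3) 1 → E3} (hP : ∀ x : sphere (0 : E3) 1, IsContact L x (P x)) :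
    Continuous P := by
  rw [continuous_iff_continuousAt]
  intro x
  refine hLcpt.tendsto_nhds_of_unique_mapClusterPt
    (Filter.Eventually.of_forall fun y => (hP y).1) ?_
  intro q hqL hq
  have hx0 : (x : E3) ≠ 0 := ne_zero_of_mem_unit_sphere x
  refine huniq x q (P x) hx0 ⟨hqL, fun z hz => ?_⟩ (hP x)
  obtain ⟨U, hU, hUq⟩ := mapClusterPt_iff_ultrafilter.mp hq
  have hUx : Filter.Tendsto (fun y : sphere (0 : E3) 1 => (y : E3)) U (nhds (x : E3)) :=
    (continuous_subtype_val.tendsto x).mono_left hU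
  exact le_of_tendsto_of_tendsto (hUx.inner tendsto_const_nhds) (hUx.inner hUq)
    (Filter.Eventually.of_forall fun y => (hP y).2 z hz)

/-- A form of the fact that three points of the unit sphere are not collinear. -/
lemma coeff_eq_zero_of_sphere {x y z : E3} (hx : ‖x‖ = 1) (hy : ‖y‖ = 1) (hz : ‖z‖ = 1)
    (hyx : y ≠ x) (hyz : y ≠ z) {α β : ℝ}
    (hαβ : α • (y - x) = β • (z - x)) : α = 0 := by
  by_contra hα
  have hin : ∀ w : E3, ‖w‖ = 1 → ‖w - x‖ ^ 2 = -2 * ⟪w - x, x⟫ := by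
    intro w hw
    rw [norm_sub_sq_real, inner_sub_left, inner_self_one hx, hx, hw]; ring
  have h1 : α * ‖y - x‖ ^ 2 = β * ‖z - x‖ ^ 2 := by
    have := congrArg (fun w : E3 => ⟪w, x⟫) hαβ
    simp only [real_inner_smul_left] at this
    rw [hin y hy, hin z hz]; linarith
  have h2 : α ^ 2 * ‖y - x‖ ^ 2 = β ^ 2 * ‖z - x‖ ^ 2 := by
    have := congrArg (fun w : E3 => ‖w‖ ^ 2) hαβ
    simpa [norm_smul, mul_pow] using this
  have hA : ‖y - x‖ ^ 2 ≠ 0 := pow_ne_zero 2 (norm_ne_zero_iff.mpr (sub_ne_zero.mpr hyx))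
  have h3 : α = β := by
    have : α * (‖y - x‖ ^ 2 * α) = β * (‖y - x‖ ^ 2 * α) := by
      calc α * (‖y - x‖ ^ 2 * α) = α ^ 2 * ‖y - x‖ ^ 2 := by ring
        _ = β * (β * ‖z - x‖ ^ 2) := by rw [h2]; ring
        _ = β * (‖y - x‖ ^ 2 * α) := by rw [← h1]; ring
    exact mul_right_cancel₀ (mul_ne_zero hA hα) this
  subst h3
  exact hyz (sub_left_injective (smul_right_injective E3 hα hαβ))

/-- A map on the unit sphere whose differences between nearby points are parallel to the
differences of the points has the form `x ↦ c + s • x`. Since three points of the sphere are not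
collinear, the proportionality factor is locally constant; the sphere is connected and has no
isolated points, so the local values of `s` and `c` agree globally. -/
lemma exists_affine_of_local {P : sphere (0 : E3) 1 → E3}
    (hloc : ∀ x : sphere (0 : E3) 1, ∃ U ∈ nhds x, ∀ y ∈ U, ∀ z ∈ U, y ≠ z →
      ∃ t : ℝ, P y - P z = t • ((y : E3) - z)) :
    ∃ (s : ℝ) (c : E3), ∀ x, P x = c + s • (x : E3) := by
  have hrank : 1 < Module.rank ℝ E3 := by
    rw [← Module.finrank_eq_rank, finrank_euclideanSpace_fin]
    norm_num
  have hconn : ConnectedSpace (sphere (0 : E3) 1) :=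
    isConnected_iff_connectedSpace.mp (isConnected_sphere hrank 0 zero_le_one)
  have hnt : Nontrivial (sphere (0 : E3) 1) := by
    obtain ⟨u, hu, -, -⟩ := exists_unit_orthogonal 0 0
    refine ⟨⟨u, by simpa using hu⟩, ⟨-u, by simpa using hu⟩, ?_⟩
    intro h
    have h1 : u = -u := congrArg Subtype.val h
    have h2 := inner_self_one hu
    nth_rw 1 [h1] at h2
    rw [inner_neg_left, inner_self_one hu] at h2
    norm_num at h2
  have hperf : ∀ (x : sphere (0 : E3) 1) (U : Set (sphere (0 : E3) 1)), U ∈ nhds x →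
      ∃ y ∈ U, y ≠ x := by
    intro x U hU
    have h1 : ∀ᶠ y in nhdsWithin x {x}ᶜ, y ∈ U ∧ y ∈ ({x}ᶜ : Set _) :=
      Filter.inter_mem (mem_nhdsWithin_of_mem_nhds hU) self_mem_nhdsWithin
    obtain ⟨y, hy, hyx⟩ := h1.exists
    exact ⟨y, hy, hyx⟩
  have hunit : ∀ x : sphere (0 : E3) 1, ‖(x : E3)‖ = 1 := fun x => by simp
  have hgerm : ∀ x : sphere (0 : E3) 1, ∃ A : ℝ × E3, ∀ᶠ y in nhds x,
      P y = A.2 + A.1 • (y : E3) := by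
    intro x
    obtain ⟨U, hU, hUP⟩ := hloc x
    have hxU : x ∈ U := mem_of_mem_nhds hU
    obtain ⟨y, hyU, hyx⟩ := hperf x U hU
    obtain ⟨t, ht⟩ := hUP y hyU x hxU hyx
    refine ⟨(t, P x - t • (x : E3)), Filter.mem_of_superset hU fun z hzU => ?_⟩
    change P z = P x - t • (x : E3) + t • (z : E3)
    by_cases hzx : z = x
    · subst hzx; abel
    by_cases hzy : z = y
    · subst hzy
      linear_combination (norm := module) ht
    obtain ⟨t', ht'⟩ := hUP z hzU x hxU hzx
    obtain ⟨μ, hμ⟩ := hUP z hzU y hyU hzy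
    have hrel : (t' - μ) • ((z : E3) - x) = (t - μ) • ((y : E3) - x) := by
      have h1 : P z - P y = (P z - P x) - (P y - P x) := by abel
      rw [hμ, ht, ht'] at h1
      have h2 : t' • ((z : E3) - x) = μ • ((z : E3) - y) + t • ((y : E3) - x) := by
        rw [h1]; abel
      rw [sub_smul, h2]
      module
    have e1 := coeff_eq_zero_of_sphere (hunit x) (hunit z) (hunit y)
      (Subtype.coe_ne_coe.mpr hzx) (Subtype.coe_ne_coe.mpr hzy) hrel
    have e2 := coeff_eq_zero_of_sphere (hunit x) (hunit y) (hunit z)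
      (Subtype.coe_ne_coe.mpr hyx) (Subtype.coe_ne_coe.mpr (Ne.symm hzy)) hrel.symm
    have htt : t' = t := by linarith
    rw [htt] at ht'
    linear_combination (norm := module) ht'
  choose A hA using hgerm
  have hlc : IsLocallyConstant A := by
    rw [IsLocallyConstant.iff_eventually_eq]
    intro x
    filter_upwards [eventually_eventually_nhds.mpr (hA x)] with y hy
    have hboth := hy.and (hA y)
    obtain ⟨h1, h2⟩ := hboth.self_of_nhds
    obtain ⟨z, ⟨h3, h4⟩, hzy⟩ := hperf y _ hboth
    have h5 : ((A y).1 - (A x).1) • ((z : E3) - y) = 0 := by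
      have e1 : (A y).2 = P y - (A y).1 • (y : E3) := by nth_rw 1 [h2]; abel
      have e2 : (A x).2 = P y - (A x).1 • (y : E3) := by nth_rw 1 [h1]; abel
      rw [h3, e1, e2] at h4
      linear_combination (norm := module) (-1 : ℝ) • h4
    have h6 : (A y).1 = (A x).1 := by
      rcases smul_eq_zero.mp h5 with h | h
      · linarith
      · exact absurd (Subtype.ext (sub_eq_zero.mp h)) hzy
    refine Prod.ext h6 ?_
    rw [h1, h6] at h2
    exact (add_right_cancel h2).symm
  obtain ⟨x₀⟩ : Nonempty (sphere (0 : E3) 1) := inferInstance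
  refine ⟨(A x₀).1, (A x₀).2, fun x => ?_⟩
  rw [← hlc.apply_eq_of_preconnectedSpace x x₀]
  exact (hA x).self_of_nhds

/-! ### Recognising the balls -/

section Balls

variable {K L : Set E3} {r : ℝ}

/-- The contact point is an affine function `c + s n` of the unit normal `n`, so that `L` has the
support function of a ball. -/
lemma DiskSections.exists_contact_affine (hD : DiskSections K L r) (hLcpt : IsCompact L)
    (hLne : L.Nonempty) :
    ∃ (s : ℝ) (c : E3), ∀ n : E3, ‖n‖ = 1 → IsContact L n (c + s • n) := by
  have hr := hD.pos
  choose P hP using fun x : sphere (0 : E3) 1 => exists_isContact hLcpt hLne (x : E3)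
  have hcont : Continuous P := continuous_of_isContact hLcpt
    (fun n p q hn hp hq => hD.contact_unique hn hp hq) hP
  have hunit : ∀ x : sphere (0 : E3) 1, ‖(x : E3)‖ = 1 := fun x => by simp
  obtain ⟨s, c, hsc⟩ := exists_affine_of_local (P := P) (by
    intro x
    refine ⟨P ⁻¹' ball (P x) (r / 4) ∩ (Subtype.val ⁻¹' ball (x : E3) (1 / 2)),
      Filter.inter_mem (hcont.continuousAt.preimage_mem_nhds (ball_mem_nhds _ (by positivity)))
        (continuous_subtype_val.continuousAt.preimage_mem_nhds (ball_mem_nhds _ (by norm_num))), ?_⟩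
    rintro y ⟨hy, hy'⟩ z ⟨hz, hz'⟩ hyz
    simp only [mem_preimage, mem_ball] at hy hy' hz hz'
    refine hD.contact_sub (hunit y) (hunit z) (hP y) (hP z) (Subtype.coe_ne_coe.mpr hyz) ?_ ?_
    · have h1 : ‖(y : E3) - z‖ < 1 := by
        rw [← dist_eq_norm]
        linarith [dist_triangle_right (y : E3) z x]
      have h2 := norm_sub_sq_real (y : E3) z
      rw [hunit, hunit] at h2
      nlinarith [norm_nonneg ((y : E3) - z)]
    · have h1 : ‖P z - P y‖ ≤ r / 2 := by
        rw [← dist_eq_norm]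
        linarith [dist_triangle_right (P z) (P y) (P x)]
      nlinarith [norm_nonneg (P z - P y)])
  refine ⟨s, c, fun n hn => ?_⟩
  have := hP ⟨n, by simpa using hn⟩
  rwa [hsc] at this

/-- Outside the ball of radius `s` about the origin every point lies on a tangent plane of it. -/
lemma exists_tangent {s : ℝ} (hs : 0 ≤ s) {x : E3} (hx : s ≤ ‖x‖) :
    ∃ n : E3, ‖n‖ = 1 ∧ ⟪n, x⟫ = s := by
  obtain ⟨e, he, hxe, -⟩ := exists_unit_orthogonal x 0
  by_cases hx0 : x = 0
  · subst hx0
    have : s = 0 := le_antisymm (by simpa using hx) hs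
    exact ⟨e, he, by simp [this]⟩
  have hpos : 0 < ‖x‖ := norm_pos_iff.mpr hx0
  have hle : (s / ‖x‖) ^ 2 ≤ 1 :=
    pow_le_one₀ (by positivity) ((div_le_one hpos).mpr hx)
  have hsq := Real.sq_sqrt (sub_nonneg.mpr hle)
  have hex : ⟪e, x⟫ = 0 := by rwa [real_inner_comm]
  refine ⟨(s / ‖x‖ ^ 2) • x + Real.sqrt (1 - (s / ‖x‖) ^ 2) • e, ?_, ?_⟩
  · have h1 : ‖(s / ‖x‖ ^ 2) • x + Real.sqrt (1 - (s / ‖x‖) ^ 2) • e‖ ^ 2 = 1 := by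
      rw [norm_add_sq_real, real_inner_smul_left, inner_smul_right, hxe, norm_smul, norm_smul, he,
        Real.norm_eq_abs, Real.norm_eq_abs, mul_one, sq_abs, hsq, mul_pow, sq_abs]
      field_simp
      ring
    exact (pow_eq_one_iff_of_nonneg (norm_nonneg _) two_ne_zero).mp h1
  · rw [inner_add_left, real_inner_smul_left, real_inner_smul_left, hex,
      real_inner_self_eq_norm_sq]
    field_simp
    ring

lemma DiskSections.balls (hD : DiskSections K L r) (hKconv : Convex ℝ K) (hLcpt : IsCompact L)
    (hLconv : Convex ℝ L) (hLint : (interior L).Nonempty) :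
    ∃ (c : E3) (R s : ℝ), K = closedBall c R ∧ L = closedBall c s := by
  have hr := hD.pos
  obtain ⟨s, c, hsc⟩ := hD.exists_contact_affine hLcpt (hLint.mono interior_subset)
  have hs : 0 ≤ s := by
    obtain ⟨n, hn, -, -⟩ := exists_unit_orthogonal 0 0
    have h1 := inner_lt_of_isContact hLint (by rintro rfl; simp at hn) (hsc n hn)
      (hsc (-n) (by rwa [norm_neg]))
    simp only [inner_add_right, inner_smul_right, inner_neg_right, inner_self_one hn] at h1
    linarith
  have hball : ∀ (S : Set E3) (ρ : ℝ), 0 ≤ ρ → Convex ℝ S → sphere c ρ ⊆ S →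
      closedBall c ρ ⊆ S := by
    intro S ρ hρ hS hsub
    rw [← convexHull_sphere_eq_closedBall c hρ]
    exact convexHull_min hsub hS
  -- A tangent plane of the ball `closedBall c s` cuts `K` in a disk of radius `r`.
  have hmem : ∀ x : E3, s ≤ ‖x - c‖ → (x ∈ K ↔ ‖x - c‖ ^ 2 ≤ r ^ 2 + s ^ 2) := by
    intro x hx
    obtain ⟨n, hn, hnx⟩ := exists_tangent hs hx
    have hnn := inner_self_one hn
    rw [hD.mem_iff n _ x (by rintro rfl; simp at hn) (hsc n hn) (by
      rw [inner_sub_right] at hnx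
      rw [inner_add_right, inner_smul_right, hnn]; linarith),
      ← sq_le_sq₀ (norm_nonneg _) hr.le, ← sub_sub, norm_sub_sq_real (x - c), inner_smul_right,
      norm_smul, hn, real_inner_comm, hnx, Real.norm_eq_abs, mul_one, sq_abs]
    constructor <;> intro h <;> linarith
  have hR : 0 ≤ r ^ 2 + s ^ 2 := by positivity
  have hRsq := Real.sq_sqrt hR
  have hsR : s ≤ Real.sqrt (r ^ 2 + s ^ 2) := Real.le_sqrt_of_sq_le (by nlinarith [sq_nonneg r])
  refine ⟨c, Real.sqrt (r ^ 2 + s ^ 2), s, Subset.antisymm ?_ ?_, Subset.antisymm ?_ ?_⟩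
  · intro x hx
    rw [mem_closedBall, dist_eq_norm]
    rcases le_total s ‖x - c‖ with h | h
    · exact Real.le_sqrt_of_sq_le ((hmem x h).mp hx)
    · exact h.trans hsR
  · refine hball K _ (Real.sqrt_nonneg _) hKconv fun x hx => ?_
    rw [mem_sphere, dist_eq_norm] at hx
    rw [hmem x (hx ▸ hsR), hx, hRsq]
  · intro x hx
    rw [mem_closedBall, dist_eq_norm]
    by_cases h0 : x - c = 0
    · rw [h0, norm_zero]; exact hs
    have hn : ‖‖x - c‖⁻¹ • (x - c)‖ = 1 := norm_smul_inv_norm h0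
    have h1 := (hsc _ hn).2 x hx
    rw [inner_add_right, inner_smul_right, inner_self_one hn, ← sub_nonneg] at h1
    have h2 : ⟪‖x - c‖⁻¹ • (x - c), x⟫ - ⟪‖x - c‖⁻¹ • (x - c), c⟫ = ‖x - c‖ := by
      have : ‖x - c‖ ≠ 0 := norm_ne_zero_iff.mpr h0
      rw [← inner_sub_right, real_inner_smul_left, real_inner_self_eq_norm_sq]
      field_simp
    linarith
  · refine hball L s hs hLconv fun x hx => ?_
    rw [mem_sphere, dist_eq_norm] at hx
    obtain ⟨n, hn, hnx⟩ : ∃ n : E3, ‖n‖ = 1 ∧ x = c + s • n := by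
      by_cases h0 : x - c = 0
      · obtain ⟨n, hn, -, -⟩ := exists_unit_orthogonal 0 0
        have : s = 0 := by rw [← hx, h0, norm_zero]
        exact ⟨n, hn, by rw [this, zero_smul, add_zero]; exact sub_eq_zero.mp h0⟩
      · refine ⟨‖x - c‖⁻¹ • (x - c), norm_smul_inv_norm h0, ?_⟩
        rw [← hx, smul_smul, mul_inv_cancel₀ (norm_ne_zero_iff.mpr h0), one_smul]
        abel
    rw [hnx]
    exact (hsc n hn).1

end Balls

/-- If for every unit vector `u` all planar sections of `K` supporting `L` and parallel
to `u` have the same constant width `h u`, then `K` and `L` are concentric balls. -/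
theorem stmt_6 (K L : Set E3)
    (hKcpt : IsCompact K) (hKconv : Convex ℝ K) (hKint : (interior K).Nonempty)
    (hLcpt : IsCompact L) (hLconv : Convex ℝ L) (hLint : (interior L).Nonempty)
    (hLK : L ⊆ interior K)
    (h : E3 → ℝ)
    (hwidth : ∀ u : E3, ‖u‖ = 1 → ∀ w : E3, ∀ d : ℝ, w ≠ 0 → ⟪w, u⟫ = 0 →
      PlaneSupports L w d → HasConstWidthIn (planeEq w d ∩ K) w (h u)) :
    ∃ (c : E3) (r s : ℝ), K = Metric.closedBall c r ∧ L = Metric.closedBall c s := by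
  obtain ⟨h₀, hS⟩ := constSections_of_hwidth hKcpt hLcpt (hLint.mono interior_subset) hLK h hwidth
  exact (hS.diskSections hKcpt hKconv hLcpt hLint hLK).balls hKconv hLcpt hLconv hLint
end
end

section
/- Let K and L be convex bodies in ℝ³ with L contained in the interior of K. Suppose that for every unit vector u ∈ S² there is a number h(u) such that for every 2-dimensional plane H that supports L and is parallel to u, the section H ∩ K is a planar convex set of constant width h(u). Then K is strictly convex, i.e., the boundary of K contains no nondegenerate line segment. -/
/-!
Suppose `p ≠ q` and the segment from `p` to `q` lies in the boundary of `K`. A plane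
`⟪n, x⟫ = ⟪n, p⟫` supporting `K` at the midpoint contains the whole segment
(`exists_normal_of_segment_subset_frontier`). The line through `p` and `q` therefore misses the
interior of `K`, hence misses `L`, and rotating a plane about this line yields a plane `H` through
it that supports `L` (`exists_supporting_plane`). The section `C = H ∩ K` has constant width and
the segment lies in one of its supporting lines. But a planar set of constant width `h` has
diameter at most `h`, so if `r ∈ C` lies on the opposite supporting line, at distance `h`, then
`p` and `q` must both be the foot of the perpendicular from `r`
(`eq_add_smul_of_constWidth`); thus `p = q`.

Only the planes parallel to the direction of the segment matter.
-/

open Metric Set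
open scoped RealInnerProductSpace

noncomputable section

lemma exists_orthogonal_pair (u n : E3) : ∃ v : E3, v ≠ 0 ∧ ⟪u, v⟫ = 0 ∧ ⟪n, v⟫ = 0 := by
  let f : E3 →ₗ[ℝ] ℝ × ℝ := ((innerSL ℝ u : E3 →L[ℝ] ℝ) : E3 →ₗ[ℝ] ℝ).prod
    ((innerSL ℝ n : E3 →L[ℝ] ℝ) : E3 →ₗ[ℝ] ℝ)
  have hf : LinearMap.ker f ≠ ⊥ := LinearMap.ker_ne_bot_of_finrank_lt (by simp)
  obtain ⟨v, hv, hv0⟩ := Submodule.exists_mem_ne_zero_of_ne_bot hf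
  have hv' : f v = 0 := hv
  refine ⟨v, hv0, ?_, ?_⟩
  · simpa [f] using congrArg Prod.fst hv'
  · simpa [f] using congrArg Prod.snd hv'

lemma exists_normal_of_segment_subset_frontier {K : Set E3} (hKcpt : IsCompact K)
    (hKconv : Convex ℝ K) (hKint : (interior K).Nonempty) {p q : E3} (hp : p ∈ frontier K)
    (hq : q ∈ frontier K) (hseg : segment ℝ p q ⊆ frontier K) :
    ∃ n : E3, (∀ x ∈ interior K, ⟪n, x⟫ < ⟪n, p⟫) ∧ (∀ x ∈ K, ⟪n, x⟫ ≤ ⟪n, p⟫) ∧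
      ⟪n, q⟫ = ⟪n, p⟫ := by
  have hmid : midpoint ℝ p q ∉ interior K := (hseg (midpoint_mem_segment p q)).2
  obtain ⟨f, hf⟩ := geometric_hahn_banach_open_point hKconv.interior isOpen_interior hmid
  have hKle : ∀ x ∈ K, f x ≤ f (midpoint ℝ p q) := by
    intro x hx
    have hx' : x ∈ closure (interior K) := by
      rw [hKconv.closure_interior_eq_closure_of_nonempty_interior hKint]
      exact subset_closure hx
    exact closure_minimal (fun y hy => (hf y hy).le)
      (isClosed_le f.continuous continuous_const) hx'
  have hpK := hKle p (hKcpt.isClosed.frontier_subset hp)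
  have hqK := hKle q (hKcpt.isClosed.frontier_subset hq)
  have hm : f (midpoint ℝ p q) = (f p + f q) / 2 := by
    rw [midpoint_eq_smul_add]
    simp
    ring
  have hinner : ∀ x, ⟪(InnerProductSpace.toDual ℝ E3).symm f, x⟫ = f x := fun x =>
    InnerProductSpace.toDual_symm_apply
  refine ⟨(InnerProductSpace.toDual ℝ E3).symm f, ?_, ?_, ?_⟩
  · intro x hx
    rw [hinner, hinner]
    linarith [hf x hx]
  · intro x hx
    rw [hinner, hinner]
    linarith [hKle x hx]
  · rw [hinner, hinner]
    linarith

/-- If the plane through `p` with normal `n` has the compact set `L` strictly on one side, then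
it can be rotated about its line through `p` in direction `u` until it supports `L`. -/
lemma exists_supporting_plane {L : Set E3} (hLcpt : IsCompact L) (hLne : L.Nonempty)
    {n p u : E3} (hnu : ⟪n, u⟫ = 0) (hn : ∀ x ∈ L, ⟪n, x⟫ < ⟪n, p⟫) :
    ∃ w : E3, w ≠ 0 ∧ ⟪w, u⟫ = 0 ∧ PlaneSupports L w ⟪w, p⟫ := by
  obtain ⟨y₀, hy₀⟩ := hLne
  have hn0 : n ≠ 0 := by
    rintro rfl
    simpa using hn y₀ hy₀
  -- The sign of `v` is chosen so that some point of `L` lies on the side `v` points to.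
  obtain ⟨v, hv0, huv, hnv, hvy⟩ : ∃ v : E3, v ≠ 0 ∧ ⟪u, v⟫ = 0 ∧ ⟪n, v⟫ = 0 ∧
      0 ≤ ⟪v, y₀ - p⟫ := by
    obtain ⟨v, hv0, huv, hnv⟩ := exists_orthogonal_pair u n
    rcases le_total 0 ⟪v, y₀ - p⟫ with hs | hs
    · exact ⟨v, hv0, huv, hnv, hs⟩
    · refine ⟨-v, neg_ne_zero.mpr hv0, ?_, ?_, ?_⟩
      · rw [inner_neg_right, huv, neg_zero]
      · rw [inner_neg_right, hnv, neg_zero]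
      · rw [inner_neg_left]
        linarith
  obtain ⟨w, hw⟩ : ∃ w : ℝ → E3, w = fun t => (1 - t) • n + t • v := ⟨_, rfl⟩
  obtain ⟨g, hgdef⟩ : ∃ g : ℝ → E3 → ℝ, g = fun t y => ⟪w t, y - p⟫ := ⟨_, rfl⟩
  have hg : Continuous (Function.uncurry g) := by
    simp only [hgdef, hw, Function.uncurry_def]
    fun_prop
  have hgt : ∀ t, Continuous (g t) := fun t => hg.comp (Continuous.prodMk_right t)
  have hF : Continuous fun t => sSup (g t '' L) := hLcpt.continuous_sSup hg
  have hmax : ∀ t, ∃ y ∈ L, sSup (g t '' L) = g t y ∧ ∀ x ∈ L, g t x ≤ g t y := fun t =>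
    hLcpt.exists_sSup_image_eq_and_ge ⟨y₀, hy₀⟩ (hgt t).continuousOn
  have h0 : sSup (g 0 '' L) ≤ 0 := by
    obtain ⟨y, hy, hys, -⟩ := hmax 0
    rw [hys]
    have := hn y hy
    simp only [hgdef, hw, sub_zero, one_smul, zero_smul, add_zero, inner_sub_right]
    linarith
  have h1 : 0 ≤ sSup (g 1 '' L) := by
    obtain ⟨y, hy, hys, hyle⟩ := hmax 1
    rw [hys]
    refine le_trans ?_ (hyle y₀ hy₀)
    simpa [hgdef, hw] using hvy
  obtain ⟨t, -, ht⟩ := intermediate_value_Icc zero_le_one hF.continuousOn ⟨h0, h1⟩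
  obtain ⟨y, hy, hys, hyle⟩ := hmax t
  have hy0 : g t y = 0 := hys.symm.trans ht
  refine ⟨w t, ?_, ?_, ⟨y, ?_, hy⟩, ?_⟩
  · intro hwt
    have e1 : ⟪w t, n⟫ = 0 := by rw [hwt, inner_zero_left]
    have e2 : ⟪w t, v⟫ = 0 := by rw [hwt, inner_zero_left]
    simp only [hw, inner_add_left, real_inner_smul_left, hnv, real_inner_comm n v,
      mul_zero, add_zero, zero_add, mul_eq_zero, inner_self_eq_zero, hn0, hv0, or_false] at e1 e2
    linarith
  · simp only [hw, inner_add_left, real_inner_smul_left, hnu, real_inner_comm u v, huv]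
    ring
  · have : ⟪w t, y - p⟫ = 0 := by simpa only [hgdef] using hy0
    rw [inner_sub_right] at this
    change ⟪w t, y⟫ = ⟪w t, p⟫
    linarith
  · intro x hx
    have : ⟪w t, x - p⟫ ≤ 0 := by simpa only [hgdef] using (hyle x hx).trans hy0.le
    rw [inner_sub_right] at this
    linarith

lemma inner_sub_le_widthIn {C : Set E3} (hC : IsCompact C) {x y : E3} (hx : x ∈ C) (hy : y ∈ C)
    (e : E3) : ⟪x - y, e⟫ ≤ widthIn C e := by
  have hcpt : IsCompact ((fun x => ⟪x, e⟫) '' C) := hC.image (by fun_prop)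
  have h1 := le_csSup hcpt.bddAbove (mem_image_of_mem _ hx)
  have h2 := csInf_le hcpt.bddBelow (mem_image_of_mem _ hy)
  rw [inner_sub_left, widthIn]
  exact sub_le_sub h1 h2

lemma norm_sub_le_of_constWidth {C : Set E3} (hC : IsCompact C) {w : E3} {d k : ℝ}
    (hCw : C ⊆ planeEq w d) (hk : HasConstWidthIn C w k) (hk0 : 0 ≤ k) {x y : E3} (hx : x ∈ C)
    (hy : y ∈ C) : ‖x - y‖ ≤ k := by
  rcases eq_or_ne (x - y) 0 with h0 | h0
  · simpa [h0] using hk0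
  have hn : ‖x - y‖ ≠ 0 := norm_ne_zero_iff.mpr h0
  have hxw : ⟪w, x⟫ = d := hCw hx
  have hyw : ⟪w, y⟫ = d := hCw hy
  rw [← hk (‖x - y‖⁻¹ • (x - y)) (norm_smul_inv_norm (𝕜 := ℝ) h0)
    (by rw [real_inner_smul_left, real_inner_comm, inner_sub_right, hxw, hyw]; simp)]
  refine le_trans (le_of_eq ?_) (inner_sub_le_widthIn hC hx hy _)
  rw [real_inner_smul_right, real_inner_self_eq_norm_sq]
  field_simp

/-- In a planar set of constant width `k`, a point of maximal height in direction `e` lies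
directly above any point of minimal height, because the distance of the two is at most their
height difference `k`. -/
lemma eq_add_smul_of_constWidth {C : Set E3} (hC : IsCompact C) {w : E3} {d k : ℝ}
    (hCw : C ⊆ planeEq w d) (hk : HasConstWidthIn C w k) (hk0 : 0 ≤ k) {e p r : E3}
    (he : ‖e‖ = 1) (hew : ⟪e, w⟫ = 0) (hp : p ∈ C) (hr : r ∈ C)
    (hpmax : ∀ x ∈ C, ⟪x, e⟫ ≤ ⟪p, e⟫) (hrmin : ∀ x ∈ C, ⟪r, e⟫ ≤ ⟪x, e⟫) :
    p = r + k • e := by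
  have hsup : sSup ((fun x => ⟪x, e⟫) '' C) = ⟪p, e⟫ :=
    IsGreatest.csSup_eq ⟨mem_image_of_mem _ hp, by rintro _ ⟨x, hx, rfl⟩; exact hpmax x hx⟩
  have hinf : sInf ((fun x => ⟪x, e⟫) '' C) = ⟪r, e⟫ :=
    IsLeast.csInf_eq ⟨mem_image_of_mem _ hr, by rintro _ ⟨x, hx, rfl⟩; exact hrmin x hx⟩
  have hwid : ⟪p - r, e⟫ = k := by
    rw [← hk e he hew, widthIn, hsup, hinf, inner_sub_left]
  have hdist := norm_sub_le_of_constWidth hC hCw hk hk0 hp hr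
  have hsq : ‖p - r - k • e‖ ^ 2 ≤ 0 := by
    rw [norm_sub_sq_real, real_inner_smul_right, hwid, norm_smul, he, Real.norm_eq_abs, mul_one,
      sq_abs]
    nlinarith [norm_nonneg (p - r)]
  have hz : p - r - k • e = 0 := by
    rw [← norm_eq_zero]
    exact pow_eq_zero_iff two_ne_zero |>.mp (le_antisymm hsq (sq_nonneg _))
  rw [sub_sub, sub_eq_zero] at hz
  exact hz

/-- If for every unit vector `u` all planar sections of `K` supporting `L` and parallel
to `u` have the same constant width `h u`, then `K` is strictly convex: its boundary
contains no nondegenerate segment. -/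
theorem stmt_7 (K L : Set E3)
    (hKcpt : IsCompact K) (hKconv : Convex ℝ K) (hKint : (interior K).Nonempty)
    (hLcpt : IsCompact L) (hLconv : Convex ℝ L) (hLint : (interior L).Nonempty)
    (hLK : L ⊆ interior K)
    (h : E3 → ℝ)
    (hwidth : ∀ u : E3, ‖u‖ = 1 → ∀ w : E3, ∀ d : ℝ, w ≠ 0 → ⟪w, u⟫ = 0 →
      PlaneSupports L w d → HasConstWidthIn (planeEq w d ∩ K) w (h u)) :
    ∀ p q : E3, p ∈ frontier K → q ∈ frontier K → segment ℝ p q ⊆ frontier K → p = q := by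
  intro p q hp hq hseg
  by_contra hpq
  have hqp : q - p ≠ 0 := sub_ne_zero.mpr (Ne.symm hpq)
  obtain ⟨n, hnint, hnK, hnq⟩ :=
    exists_normal_of_segment_subset_frontier hKcpt hKconv hKint hp hq hseg
  obtain ⟨w, hw0, hwu, hws⟩ := exists_supporting_plane (u := ‖q - p‖⁻¹ • (q - p)) hLcpt
    (hLint.mono interior_subset)
    (by rw [real_inner_smul_right, inner_sub_right, hnq, sub_self, mul_zero])
    (fun x hx => hnint x (hLK hx))
  have hcw := hwidth _ (norm_smul_inv_norm (𝕜 := ℝ) hqp) w _ hw0 hwu hws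
  generalize h (‖q - p‖⁻¹ • (q - p)) = k at hcw
  have hwq : ⟪w, q⟫ = ⟪w, p⟫ := by
    rw [real_inner_smul_right, inner_sub_right] at hwu
    have := (mul_eq_zero.mp hwu).resolve_left (inv_ne_zero (norm_ne_zero_iff.mpr hqp))
    linarith
  set C := planeEq w ⟪w, p⟫ ∩ K with hCdef
  have hCw : C ⊆ planeEq w ⟪w, p⟫ := inter_subset_left
  have hC : IsCompact C :=
    hKcpt.inter_left (isClosed_eq (by fun_prop) continuous_const)
  have hpC : p ∈ C := ⟨rfl, hKcpt.isClosed.frontier_subset hp⟩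
  have hqC : q ∈ C := ⟨hwq, hKcpt.isClosed.frontier_subset hq⟩
  obtain ⟨⟨y, hyw, hyL⟩, -⟩ := hws
  have hyC : y ∈ C := ⟨hyw, interior_subset (hLK hyL)⟩
  -- The component of `n` in the direction space of the plane; on the plane it induces the
  -- same height differences as `n`.
  let m : E3 := n - (⟪w, n⟫ / ⟪w, w⟫) • w
  have hmw : ⟪m, w⟫ = 0 := by
    have : ⟪w, w⟫ ≠ 0 := inner_self_ne_zero.mpr hw0
    simp only [m, inner_sub_left, real_inner_smul_left]
    rw [real_inner_comm w n]
    field_simp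
    ring
  have hmC : ∀ x ∈ C, ⟪x, m⟫ - ⟪p, m⟫ = ⟪n, x⟫ - ⟪n, p⟫ := by
    intro x hx
    have hxw : ⟪w, x⟫ = ⟪w, p⟫ := hCw hx
    simp only [m, inner_sub_right, real_inner_smul_right, real_inner_comm w x,
      real_inner_comm w p, hxw, real_inner_comm n x, real_inner_comm n p]
    ring
  have hm0 : m ≠ 0 := by
    intro hm
    have h1 := hmC y hyC
    have h2 := hnint y (hLK hyL)
    rw [hm, inner_zero_right, inner_zero_right] at h1
    linarith
  have hmpos : 0 < ‖m‖⁻¹ := inv_pos.mpr (norm_pos_iff.mpr hm0)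
  set e : E3 := ‖m‖⁻¹ • m with hedef
  have he : ‖e‖ = 1 := norm_smul_inv_norm (𝕜 := ℝ) hm0
  have hew : ⟪e, w⟫ = 0 := by rw [hedef, real_inner_smul_left, hmw, mul_zero]
  have hpmax : ∀ x ∈ C, ⟪x, e⟫ ≤ ⟪p, e⟫ := by
    intro x hx
    rw [hedef, real_inner_smul_right, real_inner_smul_right]
    refine mul_le_mul_of_nonneg_left ?_ hmpos.le
    linarith [hmC x hx, hnK x hx.2]
  have hqe : ⟪q, e⟫ = ⟪p, e⟫ := by
    rw [hedef, real_inner_smul_right, real_inner_smul_right]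
    congr 1
    linarith [hmC q hqC]
  have hk0 : 0 ≤ k := by
    rw [← hcw e he hew]
    simpa using inner_sub_le_widthIn hC hpC hpC e
  obtain ⟨r, hrC, hrmin⟩ :=
    hC.exists_isMinOn ⟨p, hpC⟩ (f := fun x => ⟪x, e⟫) (by fun_prop)
  have hp' := eq_add_smul_of_constWidth hC hCw hcw hk0 he hew hpC hrC hpmax
    (fun x hx => hrmin hx)
  have hq' := eq_add_smul_of_constWidth hC hCw hcw hk0 he hew hqC hrC
    (fun x hx => hqe.symm ▸ hpmax x hx) (fun x hx => hrmin hx)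
  exact hpq (hp'.trans hq'.symm)
end
end
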